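/- There exists a constant c > 0 such that every connected vertex-transitive finite simple graph G on n ≥ 3 vertices contains a cycle of length at least c · n^{13/21}. -/

import Mathlib

open SimpleGraph

namespace LC

/-- `l` is a path (as a vertex list) from `A` to `B` along arcs of `E`. -/
def IsP {V : Type} (E : Finset (V × V)) (A B : Finset V) (l : List V) : Prop :=
  l.IsChain (fun a b => (a, b) ∈ E) ∧ (∃ a ∈ A, l.head? = some a) ∧ (∃ b ∈ B, l.getLast? = some b)

def Sep {V : Type} (E : Finset (V × V)) (A B S : Finset V) : Prop :=
  ∀ l, IsP E A B l → ∃ v ∈ l, v ∈ S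

theorem chain_avoid_left {V : Type} [DecidableEq V] {E : Finset (V × V)} {x y : V} :
    ∀ {l : List V} {v : V}, (l ++ [v]).IsChain (fun a b => (a, b) ∈ insert (x, y) E) → x ∉ l →
      (l ++ [v]).IsChain (fun a b => (a, b) ∈ E) := by
  intro l
  induction l with
  | nil => intro v _ _; simp
  | cons a l ih =>
    intro v h hx
    simp only [List.mem_cons, not_or] at hx
    cases l with
    | nil =>
      simp only [List.cons_append, List.nil_append, List.isChain_cons_cons, Finset.mem_insert,
        Prod.mk.injEq, List.isChain_singleton, and_true] at h ⊢
      rcases h with h | h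
      · exact absurd h.1.symm hx.1
      · exact h
    | cons b l =>
      simp only [List.cons_append, List.isChain_cons_cons] at h ⊢
      refine ⟨?_, ih h.2 hx.2⟩
      have := h.1
      simp only [Finset.mem_insert, Prod.mk.injEq] at this
      rcases this with h | h
      · exact absurd h.1.symm hx.1
      · exact h

theorem chain_avoid_right {V : Type} [DecidableEq V] {E : Finset (V × V)} {x y : V} :
    ∀ {l : List V} {v : V}, (v :: l).IsChain (fun a b => (a, b) ∈ insert (x, y) E) → y ∉ l →
      (v :: l).IsChain (fun a b => (a, b) ∈ E) := by
  intro l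
  induction l with
  | nil => intro v _ _; simp
  | cons a l ih =>
    intro v h hx
    simp only [List.mem_cons, not_or] at hx
    simp only [List.isChain_cons_cons] at h ⊢
    refine ⟨?_, ih h.2 hx.2⟩
    have := h.1
    simp only [Finset.mem_insert, Prod.mk.injEq] at this
    rcases this with h | h
    · exact absurd h.2.symm hx.1
    · exact h

theorem first_hit {V : Type} (X : V → Prop) : ∀ (l : List V), (∃ v ∈ l, X v) →
    ∃ l1 v l2, l = l1 ++ v :: l2 ∧ X v ∧ ∀ w ∈ l1, ¬ X w := by
  classical
  intro l
  induction l with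
  | nil => rintro ⟨v, hv, _⟩; simp at hv
  | cons a l ih =>
    rintro ⟨v, hv, hX⟩
    by_cases ha : X a
    · exact ⟨[], a, l, rfl, ha, by simp⟩
    · rcases List.mem_cons.1 hv with rfl | hv
      · exact absurd hX ha
      · obtain ⟨l1, w, l2, rfl, hw, h⟩ := ih ⟨v, hv, hX⟩
        exact ⟨a :: l1, w, l2, rfl, hw, by simpa using ⟨ha, h⟩⟩

theorem last_hit {V : Type} (X : V → Prop) (l : List V) (h : ∃ v ∈ l, X v) :
    ∃ l1 v l2, l = l1 ++ v :: l2 ∧ X v ∧ ∀ w ∈ l2, ¬ X w := by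
  obtain ⟨l1, v, l2, e, hv, hl⟩ := first_hit X l.reverse (by simpa using h)
  refine ⟨l2.reverse, v, l1.reverse, ?_, hv, by simpa using hl⟩
  have := congrArg List.reverse e
  simpa using this

/-- if `n` disjoint lists each hit an `n`-set, each element is hit by some list. -/
theorem hit_surj {V : Type} [DecidableEq V] {n : ℕ} {X : Finset V} (hX : X.card = n)
    (P : Fin n → List V) (e : Fin n → V) (he : ∀ i, e i ∈ X ∧ e i ∈ P i)
    (hd : ∀ i j, i ≠ j → List.Disjoint (P i) (P j)) :
    (∀ x ∈ X, ∃ i, e i = x) := by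
  have inj : Function.Injective e := by
    intro i j h
    by_contra hne
    exact hd i j hne (he i).2 (h ▸ (he j).2)
  have him : Finset.univ.image e = X := by
    apply Finset.eq_of_subset_of_card_le
    · intro v hv; obtain ⟨i, _, rfl⟩ := Finset.mem_image.1 hv; exact (he i).1
    · rw [Finset.card_image_of_injective _ inj]; simp [hX]
  intro x hx; rw [← him] at hx; obtain ⟨i, _, h⟩ := Finset.mem_image.1 hx; exact ⟨i, h⟩

theorem isP_prefix {V : Type} {E : Finset (V × V)} {A B X : Finset V} {l1 l2 : List V} {v : V}
    (h : IsP E A B (l1 ++ v :: l2)) (hv : v ∈ X) : IsP E A X (l1 ++ [v]) := by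
  obtain ⟨h1, ⟨a, ha, h2⟩, _⟩ := h
  refine ⟨?_, ⟨a, ha, ?_⟩, v, hv, by simp⟩
  · have : l1 ++ v :: l2 = (l1 ++ [v]) ++ l2 := by simp
    rw [this] at h1
    exact h1.left_of_append
  · cases l1 <;> simpa using h2

theorem isP_suffix {V : Type} {E : Finset (V × V)} {A B X : Finset V} {l1 l2 : List V} {v : V}
    (h : IsP E A B (l1 ++ v :: l2)) (hv : v ∈ X) : IsP E X B (v :: l2) := by
  obtain ⟨h1, _, ⟨a, ha, h2⟩⟩ := h
  refine ⟨h1.right_of_append, ⟨v, hv, by simp⟩, a, ha, ?_⟩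
  simpa using h2

theorem isP_glue {V : Type} {E : Finset (V × V)} {A B X Y : Finset V} {l1 l2 : List V} {v : V}
    (h1 : IsP E A X (l1 ++ [v])) (h2 : IsP E Y B (v :: l2)) : IsP E A B (l1 ++ v :: l2) := by
  obtain ⟨c1, ⟨a, ha, hh⟩, _⟩ := h1
  obtain ⟨c2, _, ⟨b, hb, hl⟩⟩ := h2
  refine ⟨?_, ⟨a, ha, ?_⟩, b, hb, by simpa using hl⟩
  · exact List.isChain_split.2 ⟨c1, c2⟩
  · cases l1 <;> simpa using hh

theorem isP_end {V : Type} {E : Finset (V × V)} {A B : Finset V} {l : List V} (h : IsP E A B l) :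
    ∃ l1 v, l = l1 ++ [v] ∧ v ∈ B := by
  obtain ⟨_, _, b, hb, hl⟩ := h
  obtain ⟨l1, rfl⟩ := List.getLast?_eq_some_iff.1 hl
  exact ⟨l1, b, rfl, hb⟩

theorem isP_start {V : Type} {E : Finset (V × V)} {A B : Finset V} {l : List V} (h : IsP E A B l) :
    ∃ v l1, l = v :: l1 ∧ v ∈ A := by
  obtain ⟨_, ⟨b, hb, hl⟩, _⟩ := h
  obtain ⟨l1, rfl⟩ := List.head?_eq_some_iff.1 hl
  exact ⟨b, l1, rfl, hb⟩

theorem isP_mono {V : Type} {E E' : Finset (V × V)} {A B : Finset V} {l : List V}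
    (hE : E ⊆ E') (h : IsP E A B l) : IsP E' A B l :=
  ⟨h.1.imp (fun _ _ hh => hE hh), h.2⟩

theorem menger {V : Type} [DecidableEq V] (n : ℕ) (E : Finset (V × V)) :
    ∀ (A B : Finset V), (∀ S, Sep E A B S → n ≤ S.card) →
    ∃ P : Fin n → List V, (∀ i, IsP E A B (P i)) ∧
      ∀ i j, i ≠ j → List.Disjoint (P i) (P j) := by
  induction E using Finset.induction_on with
  | empty =>
    intro A B h
    have := h (A ∩ B) (by
      rintro l ⟨hc, ⟨a, ha, h1⟩, b, hb, h2⟩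
      match l, hc, h1, h2 with
      | [c], _, h1, h2 =>
        simp at h1 h2
        subst h1; subst h2
        exact ⟨c, by simp, by simp [ha, hb]⟩
      | c :: d :: l, hc, _, _ => simp at hc)
    obtain ⟨T, hT, hTc⟩ := Finset.exists_subset_card_eq this
    let e := (Finset.equivFinOfCardEq hTc).symm
    refine ⟨fun i => [(e i : V)], fun i => ?_, fun i j hij => ?_⟩
    · have := hT (e i).2
      rw [Finset.mem_inter] at this
      exact ⟨by simp, ⟨_, this.1, rfl⟩, _, this.2, rfl⟩
    · simp only [List.disjoint_singleton, List.mem_singleton]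
      intro h
      exact hij (e.injective (Subtype.ext h)).symm
  | insert xy E _ ih =>
    obtain ⟨x, y⟩ := xy
    intro A B h
    by_cases h0 : ∀ S, Sep E A B S → n ≤ S.card
    · obtain ⟨P, hP, hd⟩ := ih A B h0
      exact ⟨P, fun i => isP_mono (Finset.subset_insert _ _) (hP i), hd⟩
    push Not at h0
    obtain ⟨S, hS, hSn⟩ := h0
    have sepx : Sep (insert (x, y) E) A B (insert x S) := by
      intro l hl
      by_contra hcon
      push Not at hcon
      obtain ⟨l1, v, rfl, hv⟩ := isP_end hl
      have := chain_avoid_left hl.1 (fun hx => hcon x (by simp [hx]) (by simp))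
      obtain ⟨w, hw, hwS⟩ := hS _ ⟨this, hl.2⟩
      exact hcon w hw (by simp [hwS])
    have sepy : Sep (insert (x, y) E) A B (insert y S) := by
      intro l hl
      by_contra hcon
      push Not at hcon
      obtain ⟨v, l1, rfl, hv⟩ := isP_start hl
      have := chain_avoid_right hl.1 (fun hx => hcon y (by simp [hx]) (by simp))
      obtain ⟨w, hw, hwS⟩ := hS _ ⟨this, hl.2⟩
      exact hcon w hw (by simp [hwS])
    have hx1 := h _ sepx
    have hy1 := h _ sepy
    have hxS : x ∉ S := fun hx => by rw [Finset.insert_eq_of_mem hx] at hx1; omega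
    have hyS : y ∉ S := fun hx => by rw [Finset.insert_eq_of_mem hx] at hy1; omega
    have hxc : (insert x S).card = n := by
      rw [Finset.card_insert_of_notMem hxS] at hx1 ⊢; omega
    have hyc : (insert y S).card = n := by
      rw [Finset.card_insert_of_notMem hyS] at hy1 ⊢; omega
    obtain ⟨P, hP, hPd⟩ := ih A (insert x S) (fun T hT => h T (by
      intro l hl
      obtain ⟨l1, v, l2, rfl, hv, hl1⟩ := first_hit (· ∈ insert x S) l (sepx l hl)
      have hp := isP_prefix hl hv
      have := chain_avoid_left hp.1 (fun hx => hl1 x hx (by simp))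
      obtain ⟨w, hw, hwT⟩ := hT _ ⟨this, hp.2⟩
      refine ⟨w, ?_, hwT⟩
      simp only [List.mem_append, List.mem_singleton, List.mem_cons] at hw ⊢
      tauto))
    obtain ⟨Q, hQ, hQd⟩ := ih (insert y S) B (fun T hT => h T (by
      intro l hl
      obtain ⟨l1, v, l2, rfl, hv, hl1⟩ := last_hit (· ∈ insert y S) l (sepy l hl)
      have hp := isP_suffix hl hv
      have := chain_avoid_right hp.1 (fun hx => hl1 y hx (by simp))
      obtain ⟨w, hw, hwT⟩ := hT _ ⟨this, hp.2⟩
      refine ⟨w, ?_, hwT⟩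
      simp only [List.mem_append, List.mem_cons] at hw ⊢
      tauto))
    have tP : ∀ i, ∃ l1 v, (∀ w ∈ l1 ++ [v], w ∈ P i) ∧ v ∈ insert x S ∧
        (∀ w ∈ l1, w ∉ insert x S) ∧ IsP E A (insert x S) (l1 ++ [v]) := by
      intro i
      obtain ⟨l0, v0, h0, hv0⟩ := isP_end (hP i)
      obtain ⟨l1, v, l2, hl, hv, hl1⟩ := first_hit (· ∈ insert x S) (P i)
        ⟨v0, by rw [h0]; simp, hv0⟩
      have := hP i
      rw [hl] at this
      refine ⟨l1, v, ?_, hv, hl1, isP_prefix this hv⟩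
      intro w hw
      rw [hl]
      simp only [List.mem_append, List.mem_singleton, List.mem_cons] at hw ⊢
      tauto
    have tQ : ∀ i, ∃ v l1, (∀ w ∈ v :: l1, w ∈ Q i) ∧ v ∈ insert y S ∧
        (∀ w ∈ l1, w ∉ insert y S) ∧ IsP E (insert y S) B (v :: l1) := by
      intro i
      obtain ⟨v0, l0, h0, hv0⟩ := isP_start (hQ i)
      obtain ⟨l1, v, l2, hl, hv, hl1⟩ := last_hit (· ∈ insert y S) (Q i)
        ⟨v0, by rw [h0]; simp, hv0⟩
      have := hQ i
      rw [hl] at this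
      refine ⟨v, l2, ?_, hv, hl1, isP_suffix this hv⟩
      intro w hw
      rw [hl]
      simp only [List.mem_append, List.mem_cons] at hw ⊢
      tauto
    choose p e hpP heX hpX hpp using tP
    choose s q hqQ hsY hqY hqq using tQ
    have surj := hit_surj hxc P e (fun i => ⟨heX i, hpP i _ (by simp)⟩) hPd
    have surj' := hit_surj hyc Q s (fun i => ⟨hsY i, hqQ i _ (by simp)⟩) hQd
    -- intersections are in S
    have meet : ∀ i j v, v ∈ p i ++ [e i] → v ∈ s j :: q j → v ∈ S := by
      intro i j v hvP hvQ
      by_contra hvS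
      have ha : ∃ a1, IsP E A {v} (a1 ++ [v]) ∧ ∀ w ∈ a1, w ∉ S := by
        by_cases hv : v ∈ p i
        · obtain ⟨a1, a2, ha⟩ := List.append_of_mem hv
          have h1 := hpp i
          rw [ha, List.append_assoc] at h1
          exact ⟨a1, isP_prefix h1 (by simp), fun w hw hwS =>
            hpX i w (by rw [ha]; simp [hw]) (by simp [hwS])⟩
        · have hv' : v = e i := by simpa [hv] using hvP
          subst hv'
          exact ⟨p i, isP_prefix (hpp i) (by simp), fun w hw hwS => hpX i w hw (by simp [hwS])⟩
      have hb : ∃ b1, IsP E {v} B (v :: b1) ∧ ∀ w ∈ b1, w ∉ S := by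
        by_cases hv : v ∈ q j
        · obtain ⟨a1, a2, ha⟩ := List.append_of_mem hv
          have h1 := hqq j
          rw [ha, ← List.cons_append] at h1
          exact ⟨a2, isP_suffix h1 (by simp), fun w hw hwS =>
            hqY j w (by rw [ha]; simp [hw]) (by simp [hwS])⟩
        · have hv' : v = s j := by simpa [hv] using hvQ
          subst hv'
          exact ⟨q j, isP_suffix (l1 := []) (hqq j) (by simp),
            fun w hw hwS => hqY j w hw (by simp [hwS])⟩
      obtain ⟨a1, ha1, ha2⟩ := ha
      obtain ⟨b1, hb1, hb2⟩ := hb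
      obtain ⟨w, hw, hwS⟩ := hS _ (isP_glue ha1 hb1)
      simp only [List.mem_append, List.mem_cons] at hw
      rcases hw with hw | rfl | hw
      · exact ha2 w hw hwS
      · exact hvS hwS
      · exact hb2 w hw hwS
    have hsub : E ⊆ insert (x, y) E := Finset.subset_insert _ _
    have key : ∀ i, ∃ j, ∃ R, IsP (insert (x, y) E) A B R ∧
        (∀ w ∈ R, w ∈ p i ++ [e i] ∨ w ∈ s j :: q j) ∧
        ((e i ∈ S ∧ s j = e i) ∨ (e i = x ∧ s j = y)) := by
      intro i
      rcases Finset.mem_insert.1 (heX i) with h1 | h1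
      · obtain ⟨j, hj⟩ := surj' y (by simp)
        refine ⟨j, p i ++ [e i] ++ (s j :: q j), ?_, ?_, Or.inr ⟨h1, hj⟩⟩
        · have hA := isP_mono hsub (hpp i)
          have hB := isP_mono hsub (hqq j)
          obtain ⟨c1, ⟨a, ha, hh⟩, _⟩ := hA
          obtain ⟨c2, _, ⟨b, hb, hl⟩⟩ := hB
          refine ⟨?_, ⟨a, ha, ?_⟩, b, hb, by simpa using hl⟩
          · refine List.isChain_append.2 ⟨c1, c2, ?_⟩
            intro u hu w hw
            simp at hu hw
            subst hu; subst hw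
            rw [h1, hj]; simp
          · cases hpi : p i with
            | nil => simpa [hpi] using hh
            | cons c l => simpa [hpi] using hh
        · intro w hw
          exact List.mem_append.1 hw
      · obtain ⟨j, hj⟩ := surj' (e i) (by simp [h1])
        refine ⟨j, p i ++ e i :: q j, ?_, ?_, Or.inl ⟨h1, hj⟩⟩
        · have hB := hqq j
          rw [hj] at hB
          exact isP_mono hsub (isP_glue (hpp i) hB)
        · intro w hw
          rw [hj]
          simp only [List.mem_append, List.mem_cons, List.mem_singleton] at hw ⊢
          tauto
    choose j R hR hRm hRe using key
    refine ⟨R, hR, fun a b hab w hwa hwb => ?_⟩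
    have eP : ∀ a, e a ∈ P a := fun a => hpP a _ (by simp)
    have einj : ∀ a b, a ≠ b → e a ≠ e b := fun a b hab h => hPd a b hab (eP a) (h ▸ eP b)
    have jab : j a ≠ j b := by
      intro h
      rcases hRe a with ⟨h1, h2⟩ | ⟨h1, h2⟩ <;> rcases hRe b with ⟨h3, h4⟩ | ⟨h3, h4⟩
      · exact einj a b hab (by rw [← h2, ← h4, h])
      · rw [h, h4] at h2; exact hyS (h2 ▸ h1)
      · rw [h, h4] at h2; exact hyS (h2 ▸ h3)
      · exact einj a b hab (h1.trans h3.symm)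
    have cross : ∀ a b, a ≠ b → w ∈ p a ++ [e a] → w ∈ s (j b) :: q (j b) → False := by
      intro a b hab h1 h2
      have hwS := meet _ _ _ h1 h2
      have e1 : w = e a := by
        rcases List.mem_append.1 h1 with h | h
        · exact absurd (by simp [hwS]) (hpX a w h)
        · simpa using h
      have e2 : w = s (j b) := by
        rcases List.mem_cons.1 h2 with h | h
        · exact h
        · exact absurd (by simp [hwS]) (hqY _ w h)
      rcases hRe b with ⟨h3, h4⟩ | ⟨h3, h4⟩
      · have : e a = e b := by rw [← e1, e2, h4]
        exact einj a b hab this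
      · exact hyS (by rw [← h4, ← e2]; exact hwS)
    rcases hRm a w hwa with h1 | h1 <;> rcases hRm b w hwb with h2 | h2
    · exact hPd a b hab (hpP a _ h1) (hpP b _ h2)
    · exact cross a b hab h1 h2
    · exact cross b a hab.symm h2 h1
    · exact hQd _ _ jab (hqQ _ _ h1) (hqQ _ _ h2)

end LC


namespace LC

def GoodC4 (E : Finset (ℕ × ℕ)) (p q : ℕ → ℕ → ℤ) : Prop :=
  ∃ i i' j j', i ≠ i' ∧ j ≠ j' ∧ (i, j) ∈ E ∧ (i, j') ∈ E ∧ (i', j) ∈ E ∧ (i', j') ∈ E ∧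
    (p i j < p i j' ↔ p i' j < p i' j') ∧ (q i j < q i' j ↔ q i j' < q i' j')

def GoodHex (E : Finset (ℕ × ℕ)) (p q : ℕ → ℕ → ℤ) : Prop :=
  ∃ z b b' w a a', z ≠ b ∧ z ≠ b' ∧ b ≠ b' ∧ w ≠ a ∧ w ≠ a' ∧ a ≠ a' ∧
    (z, a) ∈ E ∧ (z, a') ∈ E ∧ (b, a) ∈ E ∧ (b', a') ∈ E ∧ (b, w) ∈ E ∧ (b', w) ∈ E ∧
    (b < z ↔ b' < z) ∧ (a < w ↔ a' < w) ∧
    (p z a < p z a' ↔ b < b') ∧ (p b a < p b w ↔ p b' a' < p b' w) ∧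
    (q b w < q b' w ↔ a < a') ∧ (q b a < q z a ↔ q b' a' < q z a')

theorem iff3 {P Q R : Prop} (h1 : ¬(P ↔ Q)) (h2 : ¬(P ↔ R)) : (Q ↔ R) := by tauto

theorem core {E : Finset (ℕ × ℕ)} {p q : ℕ → ℕ → ℤ} {u x v y b a b' a' : ℕ}
    (hux : u ≠ x) (hvy : v ≠ y) (hne : (b, a) ≠ (b', a'))
    (hbu : b ≠ u) (hbx : b ≠ x) (hbu' : b' ≠ u) (hbx' : b' ≠ x)
    (hav : a ≠ v) (hay : a ≠ y) (hav' : a' ≠ v) (hay' : a' ≠ y)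
    (e1 : (b, a) ∈ E) (e2 : (b', a') ∈ E)
    (ua : (u, a) ∈ E) (xa : (x, a) ∈ E) (ua' : (u, a') ∈ E) (xa' : (x, a') ∈ E)
    (bv : (b, v) ∈ E) (bY : (b, y) ∈ E) (bv' : (b', v) ∈ E) (bY' : (b', y) ∈ E)
    (l1 : b < u ↔ b' < u) (l2 : b < x ↔ b' < x) (l3 : a < v ↔ a' < v) (l4 : a < y ↔ a' < y)
    (l5 : q u a < q x a ↔ q u a' < q x a') (l6 : p b v < p b y ↔ p b' v < p b' y)
    (l7 : p b a < p b v ↔ p b' a' < p b' v) (l8 : p b a < p b y ↔ p b' a' < p b' y)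
    (l9 : q b a < q u a ↔ q b' a' < q u a') (l10 : q b a < q x a ↔ q b' a' < q x a') :
    GoodC4 E p q ∨ GoodHex E p q := by
  by_cases haa : a = a'
  · subst haa
    have hbb : b ≠ b' := fun h => hne (by rw [h])
    left
    by_cases h1 : (q b a < q b' a ↔ q b v < q b' v)
    · exact ⟨b, b', a, v, hbb, hav, e1, bv, e2, bv', l7, h1⟩
    by_cases h2 : (q b a < q b' a ↔ q b y < q b' y)
    · exact ⟨b, b', a, y, hbb, hay, e1, bY, e2, bY', l8, h2⟩
    exact ⟨b, b', v, y, hbb, hvy, bv, bY, bv', bY', l6, iff3 h1 h2⟩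
  by_cases hbb : b = b'
  · subst hbb
    left
    by_cases h1 : (p b a < p b a' ↔ p u a < p u a')
    · exact ⟨b, u, a, a', hbu, haa, e1, e2, ua, ua', h1, l9⟩
    by_cases h2 : (p b a < p b a' ↔ p x a < p x a')
    · exact ⟨b, x, a, a', hbx, haa, e1, e2, xa, xa', h2, l10⟩
    exact ⟨u, x, a, a', hux, haa, ua, ua', xa, xa', iff3 h1 h2, l5⟩
  by_cases h1 : (p u a < p u a' ↔ p x a < p x a')
  · exact Or.inl ⟨u, x, a, a', hux, haa, ua, ua', xa, xa', h1, l5⟩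
  by_cases h2 : (q b v < q b' v ↔ q b y < q b' y)
  · exact Or.inl ⟨b, b', v, y, hbb, hvy, bv, bY, bv', bY', l6, h2⟩
  right
  by_cases h3 : (p u a < p u a' ↔ b < b') <;> by_cases h4 : (q b v < q b' v ↔ a < a')
  · exact ⟨u, b, b', v, a, a', hbu.symm, hbu'.symm, hbb, hav.symm, hav'.symm, haa,
      ua, ua', e1, e2, bv, bv', l1, l3, h3, l7, h4, l9⟩
  · exact ⟨u, b, b', y, a, a', hbu.symm, hbu'.symm, hbb, hay.symm, hay'.symm, haa,
      ua, ua', e1, e2, bY, bY', l1, l4, h3, l8, iff3 h2 h4, l9⟩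
  · exact ⟨x, b, b', v, a, a', hbx.symm, hbx'.symm, hbb, hav.symm, hav'.symm, haa,
      xa, xa', e1, e2, bv, bv', l2, l3, iff3 h1 h3, l7, h4, l10⟩
  · exact ⟨x, b, b', y, a, a', hbx.symm, hbx'.symm, hbb, hay.symm, hay'.symm, haa,
      xa, xa', e1, e2, bY, bY', l2, l4, iff3 h1 h3, l8, iff3 h2 h4, l10⟩

theorem bad_edges {κ : ℕ} (hκ : 0 < κ) (E : Finset (ℕ × ℕ)) (f : ℕ × ℕ → ℕ)
    (hf : ∀ e ∈ E, f e < κ) :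
    4 * (E.filter (fun e => 4 * κ * (E.filter (fun e' => f e' = f e)).card < E.card)).card
      ≤ E.card := by
  set Bd := E.filter (fun e => 4 * κ * (E.filter (fun e' => f e' = f e)).card < E.card)
  have h1 : Bd.card = ∑ a ∈ Finset.range κ, (Bd.filter (fun e => f e = a)).card :=
    Finset.card_eq_sum_card_fiberwise (fun e he => by
      simp only [Finset.coe_range, Set.mem_Iio]
      exact hf e (Finset.mem_filter.1 he).1)
  have h2 : ∀ a ∈ Finset.range κ, 4 * κ * (Bd.filter (fun e => f e = a)).card ≤ E.card := by
    intro a _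
    by_cases hne : (Bd.filter (fun e => f e = a)).Nonempty
    · obtain ⟨e, he⟩ := hne
      rw [Finset.mem_filter] at he
      have h3 := (Finset.mem_filter.1 he.1).2
      refine le_trans (Nat.mul_le_mul_left _ (Finset.card_le_card ?_)) h3.le
      intro e' he'
      rw [Finset.mem_filter] at he' ⊢
      exact ⟨(Finset.mem_filter.1 he'.1).1, by rw [he'.2, he.2]⟩
    · rw [Finset.not_nonempty_iff_eq_empty] at hne
      rw [hne]; simp
  have h3 : 4 * κ * Bd.card ≤ κ * E.card := by
    rw [h1, Finset.mul_sum]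
    refine le_trans (Finset.sum_le_sum h2) ?_
    simp
  have : κ * (4 * Bd.card) ≤ κ * E.card := by linarith
  exact Nat.le_of_mul_le_mul_left this hκ

theorem comb {κ : ℕ} (hκ : 0 < κ) (E : Finset (ℕ × ℕ)) (p q : ℕ → ℕ → ℤ)
    (hE : ∀ e ∈ E, e.1 < κ ∧ e.2 < κ) (hm : 2 ^ 25 * κ ^ 8 ≤ E.card ^ 5) :
    GoodC4 E p q ∨ GoodHex E p q := by
  classical
  set m := E.card with hmdef
  let A : ℕ × ℕ → Finset ℕ := fun e => ((E.filter (fun e' => e'.2 = e.2)).image Prod.fst).erase e.1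
  let B : ℕ × ℕ → Finset ℕ := fun e => ((E.filter (fun e' => e'.1 = e.1)).image Prod.snd).erase e.2
  have memA : ∀ {e i}, i ∈ A e ↔ i ≠ e.1 ∧ (i, e.2) ∈ E := by
    intro e i
    simp only [A, Finset.mem_erase, Finset.mem_image, Finset.mem_filter]
    constructor
    · rintro ⟨h, ⟨c, d⟩, ⟨h1, h2⟩, h3⟩
      simp only at h2 h3
      subst h2; subst h3
      exact ⟨h, h1⟩
    · rintro ⟨h, h1⟩
      exact ⟨h, _, ⟨h1, rfl⟩, rfl⟩
  have memB : ∀ {e i}, i ∈ B e ↔ i ≠ e.2 ∧ (e.1, i) ∈ E := by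
    intro e i
    simp only [B, Finset.mem_erase, Finset.mem_image, Finset.mem_filter]
    constructor
    · rintro ⟨h, ⟨c, d⟩, ⟨h1, h2⟩, h3⟩
      simp only at h2 h3
      subst h2; subst h3
      exact ⟨h, h1⟩
    · rintro ⟨h, h1⟩
      exact ⟨h, _, ⟨h1, rfl⟩, rfl⟩
  have cardA : ∀ e ∈ E, (A e).card + 1 = (E.filter (fun e' => e'.2 = e.2)).card := by
    intro e he
    simp only [A]
    rw [Finset.card_erase_add_one, Finset.card_image_of_injOn]
    · intro x hx y hy h
      simp only [Finset.coe_filter, Set.mem_ofPred_eq] at hx hy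
      exact Prod.ext h (hx.2.trans hy.2.symm)
    · exact Finset.mem_image.2 ⟨e, by simp [he], rfl⟩
  have cardB : ∀ e ∈ E, (B e).card + 1 = (E.filter (fun e' => e'.1 = e.1)).card := by
    intro e he
    simp only [B]
    rw [Finset.card_erase_add_one, Finset.card_image_of_injOn]
    · intro x hx y hy h
      simp only [Finset.coe_filter, Set.mem_ofPred_eq] at hx hy
      exact Prod.ext (hx.2.trans hy.2.symm) h
    · exact Finset.mem_image.2 ⟨e, by simp [he], rfl⟩
  let t : Finset ((ℕ × ℕ) × (ℕ × ℕ)) :=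
    (Finset.range κ ×ˢ Finset.range κ) ×ˢ (Finset.range κ ×ˢ Finset.range κ)
  let r : ℕ × ℕ → ((ℕ × ℕ) × (ℕ × ℕ)) → Prop := fun e c => c.1 ∈ (A e).offDiag ∧ c.2 ∈ (B e).offDiag
  have hm32 : 32 * κ ≤ m := by
    by_contra hcon
    push Not at hcon
    have h1 : m ^ 5 < (32 * κ) ^ 5 := Nat.pow_lt_pow_left hcon (by norm_num)
    have h2 : κ ^ 5 ≤ κ ^ 8 := Nat.pow_le_pow_right hκ (by norm_num)
    have h3 : (32 * κ) ^ 5 = 2 ^ 25 * κ ^ 5 := by ring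
    rw [h3] at h1
    have := Nat.mul_le_mul_left (2 ^ 25) h2
    omega
  -- main counting
  have hex : ∃ c ∈ t, 1024 < (E.filter (fun e => r e c)).card := by
    by_contra hcon
    push Not at hcon
    have hsum := Finset.sum_card_bipartiteAbove_eq_sum_card_bipartiteBelow (s := E) (t := t) r
    have hup : ∑ c ∈ t, (Finset.bipartiteBelow r E c).card ≤ κ ^ 4 * 1024 := by
      refine le_trans (Finset.sum_le_card_nsmul t _ 1024 hcon) ?_
      simp [t]; apply le_of_eq; ring
    set Bd1 := E.filter (fun e => 4 * κ * (E.filter (fun e' => e'.2 = e.2)).card < E.card)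
    set Bd2 := E.filter (fun e => 4 * κ * (E.filter (fun e' => e'.1 = e.1)).card < E.card)
    have b1 : 4 * Bd1.card ≤ m := bad_edges hκ E Prod.snd (fun e he => (hE e he).2)
    have b2 : 4 * Bd2.card ≤ m := bad_edges hκ E Prod.fst (fun e he => (hE e he).1)
    set E' := E \ (Bd1 ∪ Bd2)
    have hE' : m ≤ 2 * E'.card := by
      have h1 := Finset.le_card_sdiff (Bd1 ∪ Bd2) E
      have h2 := Finset.card_union_le Bd1 Bd2
      change m - _ ≤ E'.card at h1
      omega
    have hlow : ∀ e ∈ E', m ^ 4 ≤ 1024 * κ ^ 4 * (Finset.bipartiteAbove r t e).card := by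
      intro e he
      rw [Finset.mem_sdiff, Finset.mem_union, not_or] at he
      obtain ⟨heE, h1, h2⟩ := he
      have h1' : m ≤ 4 * κ * ((A e).card + 1) := by
        rw [cardA e heE]; by_contra hh; exact h1 (Finset.mem_filter.2 ⟨heE, not_le.1 hh⟩)
      have h2' : m ≤ 4 * κ * ((B e).card + 1) := by
        rw [cardB e heE]; by_contra hh; exact h2 (Finset.mem_filter.2 ⟨heE, not_le.1 hh⟩)
      have hsub : (A e).offDiag ×ˢ (B e).offDiag ⊆ Finset.bipartiteAbove r t e := by
        intro c hc
        rw [Finset.mem_product] at hc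
        refine Finset.mem_filter.2 ⟨?_, hc⟩
        simp only [Finset.mem_offDiag, memA, memB] at hc
        simp only [t, Finset.mem_product, Finset.mem_range]
        exact ⟨⟨(hE _ hc.1.1.2).1, (hE _ hc.1.2.1.2).1⟩, (hE _ hc.2.1.2).2, (hE _ hc.2.2.1.2).2⟩
      have hc := Finset.card_le_card hsub
      rw [Finset.card_product, Finset.offDiag_card, Finset.offDiag_card] at hc
      have aux : ∀ s : ℕ, m ≤ 4 * κ * (s + 1) → m ^ 2 ≤ 32 * κ ^ 2 * (s * s - s) := by
        intro s hs
        have h7 : 8 ≤ s + 1 := by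
          by_contra hh
          have : 4 * κ * (s + 1) < 4 * κ * 8 := Nat.mul_lt_mul_of_pos_left (by omega) (by omega)
          omega
        obtain ⟨d, rfl⟩ : ∃ d, s = d + 7 := ⟨s - 7, by omega⟩
        have h8 : (d + 7) * (d + 7) - (d + 7) = (d + 7) * (d + 6) := by
          rw [← Nat.mul_sub_one]; rfl
        rw [h8]
        calc m ^ 2 ≤ (4 * κ * (d + 7 + 1)) ^ 2 := Nat.pow_le_pow_left hs 2
          _ = 16 * κ ^ 2 * (d + 8) ^ 2 := by ring
          _ ≤ 16 * κ ^ 2 * (2 * ((d + 7) * (d + 6))) := Nat.mul_le_mul_left _ (by nlinarith)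
          _ = _ := by ring
      calc m ^ 4 = m ^ 2 * m ^ 2 := by ring
        _ ≤ (32 * κ ^ 2 * _) * (32 * κ ^ 2 * _) := Nat.mul_le_mul (aux _ h1') (aux _ h2')
        _ = 1024 * κ ^ 4 * (((A e).card * (A e).card - (A e).card) *
              ((B e).card * (B e).card - (B e).card)) := by ring
        _ ≤ _ := Nat.mul_le_mul_left _ hc
    have h5 : E'.card * m ^ 4 ≤ 1024 * κ ^ 4 * ∑ e ∈ E, (Finset.bipartiteAbove r t e).card := by
      have := Finset.card_nsmul_le_sum E' _ _ hlow
      rw [← Finset.mul_sum, smul_eq_mul] at this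
      refine this.trans (Nat.mul_le_mul_left _ ?_)
      exact Finset.sum_le_sum_of_subset Finset.sdiff_subset
    rw [hsum] at h5
    have h6 : m ^ 5 ≤ 2 ^ 21 * κ ^ 8 := by
      calc m ^ 5 = m * m ^ 4 := by ring
        _ ≤ 2 * E'.card * m ^ 4 := Nat.mul_le_mul_right _ hE'
        _ = 2 * (E'.card * m ^ 4) := by ring
        _ ≤ 2 * (1024 * κ ^ 4 * (κ ^ 4 * 1024)) :=
          Nat.mul_le_mul_left _ (h5.trans (Nat.mul_le_mul_left _ hup))
        _ = _ := by ring
    have h7 : 0 < κ ^ 8 := pow_pos hκ 8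
    omega
  obtain ⟨⟨⟨u, x⟩, ⟨v, y⟩⟩, _, hc⟩ := hex
  let lab : ℕ × ℕ → Bool × Bool × Bool × Bool × Bool × Bool × Bool × Bool × Bool × Bool := fun e =>
    (decide (e.1 < u), decide (e.1 < x), decide (e.2 < v), decide (e.2 < y),
      decide (q u e.2 < q x e.2), decide (p e.1 v < p e.1 y),
      decide (p e.1 e.2 < p e.1 v), decide (p e.1 e.2 < p e.1 y),
      decide (q e.1 e.2 < q u e.2), decide (q e.1 e.2 < q x e.2))
  obtain ⟨⟨b, a⟩, he1, ⟨b', a'⟩, he2, hne, hl⟩ :=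
    Finset.exists_ne_map_eq_of_card_lt_of_maps_to (t := Finset.univ) (f := lab)
      (s := E.filter (fun e => r e ((u, x), (v, y)))) (by simpa using hc) (fun _ _ => by simp)
  simp only [lab, Prod.mk.injEq, decide_eq_decide] at hl
  obtain ⟨l1, l2, l3, l4, l5, l6, l7, l8, l9, l10⟩ := hl
  simp only [r, Finset.mem_filter, Finset.mem_offDiag, memA, memB] at he1 he2
  obtain ⟨e1, ⟨⟨a1, a2⟩, ⟨a3, a4⟩, a5⟩, ⟨a6, a7⟩, ⟨a8, a9⟩, a10⟩ := he1
  obtain ⟨e2, ⟨⟨c1, c2⟩, ⟨c3, c4⟩, c5⟩, ⟨c6, c7⟩, ⟨c8, c9⟩, c10⟩ := he2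
  exact core a5 a10 hne a1.symm a3.symm c1.symm c3.symm a6.symm a8.symm c6.symm c8.symm e1 e2
    a2 a4 c2 c4 a7 a9 c7 c9 l1 l2 l3 l4 l5 l6 l7 l8 l9 l10

end LC


namespace LC
open SimpleGraph

def Cyc {V : Type} (G : SimpleGraph V) (ℓ : ℤ) (f : ℤ → V) : Prop :=
  3 ≤ ℓ ∧ (∀ a, f (a + ℓ) = f a) ∧ (∀ a, G.Adj (f a) (f (a + 1))) ∧
    (∀ a b, f a = f b → a < b + ℓ → b < a + ℓ → a = b)

def Ch {V : Type} (G : SimpleGraph V) (s : V) (Q : List V) (t : V) : Prop :=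
  (s :: Q ++ [t]).IsChain G.Adj

def MaxL {V : Type} (G : SimpleGraph V) (ℓ : ℤ) : Prop :=
  ∀ (v : V) (p : G.Walk v v), p.IsCycle → (p.length : ℤ) ≤ ℓ

section
variable {V : Type} {G : SimpleGraph V}

theorem Ch.trans {s t r : V} {Q Q' : List V} (h : Ch G s Q t) (h' : Ch G t Q' r) :
    Ch G s (Q ++ t :: Q') r := by
  unfold Ch at *
  rw [show s :: (Q ++ t :: Q') ++ [r] = (s :: Q) ++ t :: (Q' ++ [r]) by simp, List.isChain_split]
  exact ⟨h, h'⟩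

theorem Ch.symm {s t : V} {Q : List V} (h : Ch G s Q t) : Ch G t Q.reverse s := by
  unfold Ch at *
  have : List.IsChain G.Adj (s :: Q ++ [t]).reverse := by
    rw [List.isChain_reverse]
    exact h.imp (fun a b hab => hab.symm)
  have h2 : (s :: Q ++ [t]).reverse = t :: Q.reverse ++ [s] := by simp
  rw [h2] at this
  exact this

theorem MaxL.le {ℓ : ℤ} (hM : MaxL G ℓ) {x : V} {Q : List V} (h : Ch G x Q x)
    (hn : (x :: Q).Nodup) (hl : 3 ≤ (x :: Q).length) : ((x :: Q).length : ℤ) ≤ ℓ := by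
  have h0 : (x :: Q ++ [x]) ≠ [] := by simp
  let w := Walk.ofSupport (x :: Q ++ [x]) h0 h
  have hs : w.support = x :: Q ++ [x] := Walk.support_ofSupport _ _
  have hx : (x :: Q ++ [x]).getLast h0 = x := by simp
  let w' : G.Walk x x := w.copy rfl hx
  have hs' : w'.support = x :: Q ++ [x] := by rw [← hs]; exact Walk.support_copy _ _ _
  have hl' : w'.length = (x :: Q).length := by
    have := w'.length_support; rw [hs'] at this; simp at this ⊢; omega
  have hc : w'.IsCycle := by
    rw [Walk.isCycle_iff_isPath_tail_and_le_length]
    refine ⟨?_, by omega⟩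
    rw [Walk.isPath_def]
    rw [Walk.support_tail_of_not_nil]
    · rw [hs']; simp
      simp at hn
      rw [List.nodup_append]
      simp; refine ⟨hn.2, ?_⟩
      intro a ha hax; exact hn.1 (hax ▸ ha)
    · rw [Walk.not_nil_iff_lt_length]; omega
  have := hM x w' hc
  rw [hl'] at this; exact this

def pos (a b : ℤ) : List ℤ := (List.range (b - a - 1).toNat).map (fun i : ℕ => a + 1 + (i : ℤ))

theorem mem_pos {a b c : ℤ} : c ∈ pos a b ↔ a < c ∧ c < b := by
  unfold pos
  simp only [List.mem_map, List.mem_range]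
  constructor
  · rintro ⟨i, hi, rfl⟩; omega
  · intro h; exact ⟨(c - a - 1).toNat, by omega, by omega⟩

theorem nodup_pos (a b : ℤ) : (pos a b).Nodup := by
  unfold pos
  refine List.Nodup.map ?_ List.nodup_range
  intro i j h; simpa using h

theorem length_pos' (a b : ℤ) (h : a < b) : ((pos a b).length : ℤ) = b - a - 1 := by
  unfold pos; simp; omega

theorem Cyc.seg {ℓ : ℤ} {f : ℤ → V} (hf : Cyc G ℓ f) (a b : ℤ) (h : a < b) :
    Ch G (f a) ((pos a b).map f) (f b) := by
  obtain ⟨k, rfl⟩ : ∃ k : ℕ, b = a + 1 + k := ⟨(b - a - 1).toNat, by omega⟩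
  clear h
  induction k with
  | zero => 
    simp [Ch, pos]; exact hf.2.2.1 a
  | succ k ih =>
    have h1 : Ch G (f (a + 1 + k)) [] (f (a + 1 + (k + 1 : ℕ))) := by
      have := hf.2.2.1 (a + 1 + k)
      simp [Ch]; convert this using 2; ring
    have := ih.trans h1
    convert this using 1
    have e1 : (a + 1 + ((k + 1 : ℕ) : ℤ) - a - 1).toNat = k + 1 := by omega
    have e2 : (a + 1 + (k : ℤ) - a - 1).toNat = k := by omega
    unfold pos
    rw [e1, e2, List.range_succ]; simp

theorem Cyc.neg {ℓ : ℤ} {f : ℤ → V} (hf : Cyc G ℓ f) : Cyc G ℓ (fun a => f (-a)) := by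
  refine ⟨hf.1, ?_, ?_, ?_⟩
  · intro a; have := hf.2.1 (-(a + ℓ)); simp only; rw [← this]; congr 1; ring
  · intro a; have := hf.2.2.1 (-(a + 1)); simp only
    rw [show -(a+1) + 1 = -a by ring] at this; exact this.symm
  · intro a b h h1 h2
    have := hf.2.2.2 (-a) (-b) h (by omega) (by omega); omega

def Av (f : ℤ → V) (Q : List V) : Prop := ∀ v ∈ Q, ∀ a, f a ≠ v

theorem Cyc.nodup_map {ℓ : ℤ} {f : ℤ → V} (hf : Cyc G ℓ f) (A : List ℤ) (m : ℤ)
    (h : A.Nodup) (h2 : ∀ a ∈ A, m ≤ a ∧ a < m + ℓ) : (A.map f).Nodup := by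
  refine List.Nodup.map_on ?_ h
  intro x hx y hy hxy
  have := h2 x hx; have := h2 y hy
  exact hf.2.2.2 x y hxy (by omega) (by omega)

/-- finishing lemma -/
theorem finish {ℓ : ℤ} {f : ℤ → V} (hf : Cyc G ℓ f) (hM : MaxL G ℓ) (A : List ℤ) (R : List V)
    {x : V} {Q : List V} (m : ℤ) (hA : A.Nodup) (h2 : ∀ a ∈ A, m ≤ a ∧ a < m + ℓ)
    (hR : R.Nodup) (hav : Av f R) (hch : Ch G x Q x) (hp : (x :: Q).Perm (A.map f ++ R))
    (h3 : 3 ≤ A.length + R.length) : (A.length : ℤ) + R.length ≤ ℓ := by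
  have hl : (x :: Q).length = A.length + R.length := by rw [hp.length_eq]; simp
  have := hM.le hch (hp.nodup_iff.2 (by
    rw [List.nodup_append']
    refine ⟨hf.nodup_map A m hA h2, hR, ?_⟩
    intro v hv hv'
    obtain ⟨a, -, rfl⟩ := List.mem_map.1 hv
    exact hav _ hv' a rfl)) (by omega)
  rw [hl] at this; push_cast at this; exact this

theorem ex1 {ℓ : ℤ} {f : ℤ → V} (hf : Cyc G ℓ f) (hM : MaxL G ℓ) {P1 P2 : ℤ} (h1 : P1 < P2)
    (h2 : P2 < P1 + ℓ) {Q : List V} (hQ : Ch G (f P1) Q (f P2)) (hn : Q.Nodup) (ha : Av f Q)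
    (h0 : Q ≠ []) : 1 + (Q.length : ℤ) ≤ P2 - P1 := by
  classical
  have c1 := hf.seg P2 (P1 + ℓ) h2
  have hQ' := hQ
  rw [← hf.2.1 P1] at hQ'
  have c := c1.trans hQ'
  have hl0 : 1 ≤ Q.length := List.length_pos_iff.2 h0
  have := finish hf hM (P2 :: (P1 + ℓ) :: pos P2 (P1 + ℓ)) Q P2 (by
    simp [mem_pos, nodup_pos]; omega) (by
    intro a ha; simp [mem_pos] at ha; omega) hn ha c (by
    rw [List.perm_iff_count]; intro a; simp [List.count_cons]; omega) (by simp; omega)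
  have e := length_pos' P2 (P1 + ℓ) h2
  simp only [List.length_cons] at this; push_cast at this; omega

theorem ex2 {ℓ : ℤ} {f : ℤ → V} (hf : Cyc G ℓ f) (hM : MaxL G ℓ) {P1 P2 P3 P4 : ℤ} (h1 : P1 < P2)
    (h2 : P2 < P3) (h3 : P3 < P4) (h4 : P4 < P1 + ℓ) {Q Q' : List V}
    (hQ : Ch G (f P1) Q (f P3)) (hQ' : Ch G (f P2) Q' (f P4)) 
    (hn : (Q ++ Q').Nodup) (ha : Av f (Q ++ Q')) :
    2 + (Q.length : ℤ) + Q'.length ≤ (P2 - P1) + (P4 - P3) := by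
  classical
  have c1 := hf.seg P2 P3 h2
  have c2 := hf.seg P4 (P1 + ℓ) h4
  rw [← hf.2.1 P1] at hQ
  have c := c1.trans (hQ.symm.trans (c2.symm.trans hQ'.symm))
  have := finish hf hM (P2 :: pos P2 P3 ++ P3 :: P4 :: (P1 + ℓ) :: pos P4 (P1 + ℓ)) (Q ++ Q') P2 (by
    simp [mem_pos, nodup_pos, List.nodup_append]; and_intros <;> intros <;> first | omega | grind) (by
    intro a ha; simp [mem_pos] at ha; omega) hn ha c (by
    rw [List.perm_iff_count]; intro a; simp [List.count_cons]; omega) (by simp; omega)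
  have e := length_pos' P2 P3 h2
  have e := length_pos' P4 (P1 + ℓ) h4
  simp only [List.length_cons, List.length_append] at this; push_cast at this; omega

theorem ex3 {ℓ : ℤ} {f : ℤ → V} (hf : Cyc G ℓ f) (hM : MaxL G ℓ) {P1 P2 P3 P4 P5 P6 : ℤ}
    (h1 : P1 < P2) (h2 : P2 < P3) (h3 : P3 < P4) (h4 : P4 < P5) (h5 : P5 < P6) (h6 : P6 < P1 + ℓ)
    {Q Q' W : List V}
    (hQ : Ch G (f P1) Q (f P3)) (hQ' : Ch G (f P2) Q' (f P5)) (hW : Ch G (f P4) W (f P6)) 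
    (hn : (Q ++ Q' ++ W).Nodup) (ha : Av f (Q ++ Q' ++ W)) :
    3 + (Q.length : ℤ) + Q'.length + W.length ≤ (P2 - P1) + (P4 - P3) + (P6 - P5) := by
  classical
  have c1 := hf.seg P2 P3 h2
  have c2 := hf.seg P6 (P1 + ℓ) h6
  have c3 := hf.seg P4 P5 h4
  rw [← hf.2.1 P1] at hQ
  have c := c1.trans (hQ.symm.trans (c2.symm.trans (hW.symm.trans (c3.trans hQ'.symm))))
  have := finish hf hM (P2 :: pos P2 P3 ++ P3 :: P4 :: pos P4 P5 ++ P5 :: P6 :: (P1 + ℓ) :: pos P6 (P1 + ℓ)) (Q ++ Q' ++ W) P2 (by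
    simp [mem_pos, nodup_pos, List.nodup_append]; and_intros <;> intros <;> first | omega | grind) (by
    intro a ha; simp [mem_pos] at ha; omega) hn ha c (by
    rw [List.perm_iff_count]; intro a; simp [List.count_cons]; omega) (by simp; omega)
  have e := length_pos' P2 P3 h2
  have e := length_pos' P6 (P1 + ℓ) h6
  have e := length_pos' P4 P5 h4
  simp only [List.length_cons, List.length_append] at this; push_cast at this; omega

end
end LC

namespace LC
open SimpleGraph
section
variable {V : Type} {G : SimpleGraph V}

theorem Av.perm {f : ℤ → V} {R R' : List V} (h : Av f R) (hp : R.Perm R') : Av f R' :=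
  fun v hv => h v (hp.mem_iff.2 hv)

theorem ex2' {ℓ : ℤ} {f : ℤ → V} (hf : Cyc G ℓ f) (hM : MaxL G ℓ) {x1 x2 x3 x4 : ℤ}
    (b1 : 0 ≤ x1 ∧ x1 < ℓ) (b2 : 0 ≤ x2 ∧ x2 < ℓ) (b3 : 0 ≤ x3 ∧ x3 < ℓ) (b4 : 0 ≤ x4 ∧ x4 < ℓ)
    (hs : (x1 < x3 ∧ x1 < x4 ∧ x2 < x3 ∧ x2 < x4) ∨ (x3 < x1 ∧ x4 < x1 ∧ x3 < x2 ∧ x4 < x2))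
    (ho : (x1 < x2 ∧ x3 < x4) ∨ (x2 < x1 ∧ x4 < x3))
    {Q Q' : List V} (hQ : Ch G (f x1) Q (f x3)) (hQ' : Ch G (f x2) Q' (f x4)) 
    (hn : (Q ++ Q').Nodup) (ha : Av f (Q ++ Q')) :
    2 + (Q.length : ℤ) + Q'.length ≤ (max x1 x2 - min x1 x2) + (max x3 x4 - min x3 x4) := by
  classical
  rcases hs with hs | hs <;> rcases ho with ho | ho
  · have := ex2 hf hM ho.1 (by omega) ho.2 (by omega) hQ hQ' hn ha
    omega
  · have pm : (Q ++ Q').Perm (Q' ++ Q) := List.perm_append_comm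
    have := ex2 hf hM ho.1 (by omega) ho.2 (by omega) hQ' hQ (pm.nodup_iff.1 hn) (ha.perm pm)
    omega
  · have pm : (Q ++ Q').Perm (Q.reverse ++ Q'.reverse) := by
      rw [List.perm_iff_count]; intro a; simp
    have := ex2 hf hM ho.2 (by omega) ho.1 (by omega) hQ.symm hQ'.symm (pm.nodup_iff.1 hn) (ha.perm pm)
    simp only [List.length_reverse] at this
    omega
  · have pm : (Q ++ Q').Perm (Q'.reverse ++ Q.reverse) := by
      rw [List.perm_iff_count]; intro a; simp; omega
    have := ex2 hf hM ho.2 (by omega) ho.1 (by omega) hQ'.symm hQ.symm (pm.nodup_iff.1 hn) (ha.perm pm)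
    simp only [List.length_reverse] at this
    omega

theorem ex3a {ℓ : ℤ} {f : ℤ → V} (hf : Cyc G ℓ f) (hM : MaxL G ℓ) {x1 x2 x3 x4 x5 x6 : ℤ}
    (h12 : x1 < x2) (h23 : x2 < x3) (h24 : x2 < x4) (h35 : x3 < x5) (h36 : x3 < x6)
    (h45 : x4 < x5) (h46 : x4 < x6) (h5 : x5 < x1 + ℓ) (h6 : x6 < x1 + ℓ)
    (ho : (x3 < x4 ∧ x5 < x6) ∨ (x4 < x3 ∧ x6 < x5))
    {Q Q' W : List V}
    (hQ : Ch G (f x1) Q (f x3)) (hQ' : Ch G (f x2) Q' (f x5)) (hW : Ch G (f x4) W (f x6)) 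
    (hn : (Q ++ Q' ++ W).Nodup) (ha : Av f (Q ++ Q' ++ W)) :
    3 + (Q.length : ℤ) + Q'.length + W.length ≤ (max x1 x2 - min x1 x2) + (max x3 x4 - min x3 x4)
      + (max x5 x6 - min x5 x6) := by
  classical
  rcases ho with ho | ho
  · have := ex3 hf hM h12 h23 ho.1 h45 ho.2 h6 hQ hQ' hW hn ha
    omega
  · have pm : (Q ++ Q' ++ W).Perm (Q' ++ Q ++ W.reverse) := by
      rw [List.perm_iff_count]; intro a; simp; omega
    have e : ∀ x, f (-(-x + ℓ)) = f x := by
      intro x; rw [← hf.2.1]; congr 1; ring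
    have := ex3 hf.neg hM (P1 := -x2) (P2 := -x1) (P3 := -x5 + ℓ) (P4 := -x6 + ℓ) (P5 := -x3 + ℓ)
      (P6 := -x4 + ℓ) (by omega) (by omega) (by omega) (by omega) (by omega) (by omega)
      (Q := Q') (Q' := Q) (W := W.reverse)
      (by simp only [e, neg_neg]; exact hQ')
      (by simp only [e, neg_neg]; exact hQ) (by simp only [e, neg_neg]; exact hW.symm)
      (pm.nodup_iff.1 hn) (fun v hv a => (ha.perm pm) v hv (-a))
    simp only [List.length_reverse] at this
    omega

theorem ex3s {ℓ : ℤ} {f : ℤ → V} (hf : Cyc G ℓ f) (hM : MaxL G ℓ) {x1 x2 x3 x4 x5 x6 : ℤ}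
    (h1 : x1 < x3 ∧ x1 < x4 ∧ x1 < x5 ∧ x1 < x6)
    (h2 : x2 < x3 ∧ x2 < x4 ∧ x2 < x5 ∧ x2 < x6)
    (h3 : x3 < x1 + ℓ ∧ x4 < x1 + ℓ ∧ x5 < x1 + ℓ ∧ x6 < x1 + ℓ)
    (h4 : x3 < x2 + ℓ ∧ x4 < x2 + ℓ ∧ x5 < x2 + ℓ ∧ x6 < x2 + ℓ)
    (hs : (x1 < x2 ∧ x3 < x5 ∧ x3 < x6 ∧ x4 < x5 ∧ x4 < x6) ∨
      (x2 < x1 ∧ x5 < x3 ∧ x6 < x3 ∧ x5 < x4 ∧ x6 < x4))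
    (ho : (x3 < x4 ∧ x5 < x6) ∨ (x4 < x3 ∧ x6 < x5))
    {Q Q' W : List V}
    (hQ : Ch G (f x1) Q (f x3)) (hQ' : Ch G (f x2) Q' (f x5)) (hW : Ch G (f x4) W (f x6)) 
    (hn : (Q ++ Q' ++ W).Nodup) (ha : Av f (Q ++ Q' ++ W)) :
    3 + (Q.length : ℤ) + Q'.length + W.length ≤ (max x1 x2 - min x1 x2) + (max x3 x4 - min x3 x4)
      + (max x5 x6 - min x5 x6) := by
  classical
  rcases hs with hs | hs
  · exact ex3a hf hM (by omega) (by omega) (by omega) (by omega) (by omega) (by omega) (by omega)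
      (by omega) (by omega) ho hQ hQ' hW hn ha
  · have pm : (Q ++ Q' ++ W).Perm (Q' ++ Q ++ W.reverse) := by
      rw [List.perm_iff_count]; intro a; simp; omega
    have := ex3a hf hM (x1 := x2) (x2 := x1) (x3 := x5) (x4 := x6) (x5 := x3) (x6 := x4)
      (by omega) (by omega) (by omega) (by omega) (by omega) (by omega) (by omega)
      (by omega) (by omega) (by omega) hQ' hQ hW.symm (pm.nodup_iff.1 hn) (ha.perm pm)
    simp only [List.length_reverse] at this
    omega

theorem ex3' {ℓ : ℤ} {f : ℤ → V} (hf : Cyc G ℓ f) (hM : MaxL G ℓ) {x1 x2 x3 x4 x5 x6 : ℤ}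
    (b1 : 0 ≤ x1 ∧ x1 < ℓ) (b2 : 0 ≤ x2 ∧ x2 < ℓ) (b3 : 0 ≤ x3 ∧ x3 < ℓ) (b4 : 0 ≤ x4 ∧ x4 < ℓ)
    (b5 : 0 ≤ x5 ∧ x5 < ℓ) (b6 : 0 ≤ x6 ∧ x6 < ℓ)
    (hz : ((x1 < x3 ∧ x1 < x4 ∧ x1 < x5 ∧ x1 < x6) ∧ (x2 < x3 ∧ x2 < x4 ∧ x2 < x5 ∧ x2 < x6)) ∨
      ((x3 < x1 ∧ x4 < x1 ∧ x5 < x1 ∧ x6 < x1) ∧ (x3 < x2 ∧ x4 < x2 ∧ x5 < x2 ∧ x6 < x2)))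
    (hs : (x1 < x2 ∧ x3 < x5 ∧ x3 < x6 ∧ x4 < x5 ∧ x4 < x6) ∨
      (x2 < x1 ∧ x5 < x3 ∧ x6 < x3 ∧ x5 < x4 ∧ x6 < x4))
    (ho : (x3 < x4 ∧ x5 < x6) ∨ (x4 < x3 ∧ x6 < x5))
    {Q Q' W : List V}
    (hQ : Ch G (f x1) Q (f x3)) (hQ' : Ch G (f x2) Q' (f x5)) (hW : Ch G (f x4) W (f x6)) 
    (hn : (Q ++ Q' ++ W).Nodup) (ha : Av f (Q ++ Q' ++ W)) :
    3 + (Q.length : ℤ) + Q'.length + W.length ≤ (max x1 x2 - min x1 x2) + (max x3 x4 - min x3 x4)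
      + (max x5 x6 - min x5 x6) := by
  rcases hz with hz | hz
  · exact ex3s hf hM hz.1 hz.2 (by omega) (by omega) hs ho hQ hQ' hW hn ha
  · have := ex3s hf hM (x1 := x1) (x2 := x2) (x3 := x3 + ℓ) (x4 := x4 + ℓ) (x5 := x5 + ℓ)
      (x6 := x6 + ℓ) (by omega) (by omega) (by omega) (by omega) (by omega) (by omega)
      (Q := Q) (Q' := Q') (W := W)
      (by rw [hf.2.1]; exact hQ) (by rw [hf.2.1]; exact hQ') (by rw [hf.2.1, hf.2.1]; exact hW) hn ha
    omega

structure PS {ι : Type} (G : SimpleGraph V) (ℓ : ℤ) (f g : ℤ → V) (p q : ι → ℤ) (L : ι → List V) :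
    Prop where
  hf : Cyc G ℓ f
  hg : Cyc G ℓ g
  hp : ∀ t, 0 ≤ p t ∧ p t < ℓ
  hq : ∀ t, 0 ≤ q t ∧ q t < ℓ
  ch : ∀ t, Ch G (f (p t)) (L t) (g (q t))
  nd : ∀ t, (L t).Nodup
  avf : ∀ t, Av f (L t)
  avg : ∀ t, Av g (L t)
  pf : ∀ t a, g a ≠ f (p t)
  qg : ∀ t a, f a ≠ g (q t)
  dis : ∀ t t', t ≠ t' → List.Disjoint (L t) (L t')
  pinj : ∀ t t', p t = p t' → t = t'
  qinj : ∀ t t', q t = q t' → t = t'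

variable {ι : Type} {ℓ : ℤ} {f g : ℤ → V} {p q : ι → ℤ} {L : ι → List V}

theorem PS.symm (h : PS G ℓ f g p q L) : PS G ℓ g f q p (fun t => (L t).reverse) where
  hf := h.hg
  hg := h.hf
  hp := h.hq
  hq := h.hp
  ch t := (h.ch t).symm
  nd t := List.nodup_reverse.2 (h.nd t)
  avf t v hv := h.avg t v (List.mem_reverse.1 hv)
  avg t v hv := h.avf t v (List.mem_reverse.1 hv)
  pf := h.qg
  qg := h.pf
  dis t t' ht v hv hv' := h.dis t t' ht (List.mem_reverse.1 hv) (List.mem_reverse.1 hv')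
  pinj := h.qinj
  qinj := h.pinj

open Classical in
noncomputable def arc (f g : ℤ → V) (x : ℤ) : ℕ :=
  ((Finset.Icc 0 x).filter (fun c => ∃ a, g a = f c)).card

theorem arc_mono (f g : ℤ → V) {x y : ℤ} (h : x ≤ y) : arc f g x ≤ arc f g y := by
  classical
  unfold arc
  exact Finset.card_le_card (Finset.filter_subset_filter _ (Finset.Icc_subset_Icc le_rfl h))

theorem lt_of_arc {x y : ℤ} (h : arc f g x < arc f g y) : x < y := by
  by_contra hc
  have := arc_mono f g (not_lt.1 hc); omega

theorem arc_same {x y c : ℤ} (h : arc f g x = arc f g y) (h0 : 0 ≤ x) (h1 : x < c) (h2 : c ≤ y) (a : ℤ) :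
    g a ≠ f c := by
  classical
  intro hga
  have : arc f g x < arc f g y := by
    unfold arc
    refine Finset.card_lt_card ⟨Finset.filter_subset_filter _ (Finset.Icc_subset_Icc le_rfl (by omega)), ?_⟩
    intro hs
    have := hs (Finset.mem_filter.2 ⟨Finset.mem_Icc.2 ⟨by omega, h2⟩, a, hga⟩)
    simp only [Finset.mem_filter, Finset.mem_Icc] at this
    omega
  omega

/-- membership predicate for detours -/
def DM (g : ℤ → V) (q : ι → ℤ) (L : ι → List V) (t t' : ι) (Q : List V) : Prop :=
  ∀ v ∈ Q, v ∈ L t ∨ v ∈ L t' ∨ ∃ c, (q t ≤ c ∧ c ≤ q t' ∨ q t' ≤ c ∧ c ≤ q t) ∧ v = g c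

theorem PS.detour (h : PS G ℓ f g p q L) {t t' : ι} (hne : t ≠ t')
    (ha : arc g f (q t) = arc g f (q t')) :
    ∃ Q, Ch G (f (p t)) Q (f (p t')) ∧ Q.Nodup ∧ Av f Q ∧
      (Q.length : ℤ) = (L t).length + (L t').length + (max (q t) (q t') - min (q t) (q t')) + 1 ∧
      DM g q L t t' Q := by
  classical
  have main : ∀ t t' : ι, q t < q t' → arc g f (q t) = arc g f (q t') → 
    ∃ Q, Ch G (f (p t)) Q (f (p t')) ∧ Q.Nodup ∧ Av f Q ∧
      (Q.length : ℤ) = (L t).length + (L t').length + (max (q t) (q t') - min (q t) (q t')) + 1 ∧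
      DM g q L t t' Q := by
    intro t t' hlt ha
    have hne : t ≠ t' := by rintro rfl; omega
    have hq1 := h.hq t
    have hq2 := h.hq t'
    have hc := (h.ch t).trans ((h.hg.seg _ _ hlt).trans (h.ch t').symm)
    have pm : (L t ++ g (q t) :: ((pos (q t) (q t')).map g ++ g (q t') :: (L t').reverse)).Perm 
        ((q t :: q t' :: pos (q t) (q t')).map g ++ (L t ++ L t')) := by
      rw [List.perm_iff_count]; intro a; simp [List.count_cons]; omega
    have hmem : ∀ v ∈ ((q t :: q t' :: pos (q t) (q t')).map g ++ (L t ++ L t')),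
        v ∈ L t ∨ v ∈ L t' ∨ ∃ c, (q t ≤ c ∧ c ≤ q t') ∧ v = g c := by
      intro v hv
      simp only [List.mem_append, List.mem_map, List.mem_cons, mem_pos] at hv
      rcases hv with ⟨c, hc, rfl⟩ | hv | hv
      · right; right; exact ⟨c, by omega, rfl⟩
      · exact Or.inl hv
      · exact Or.inr (Or.inl hv)
    refine ⟨_, hc, ?_, ?_, ?_, ?_⟩
    · rw [pm.nodup_iff, List.nodup_append']
      refine ⟨h.hg.nodup_map _ (q t) (by simp [mem_pos, nodup_pos]; omega) (by
        intro a ha; simp [mem_pos] at ha; omega), ?_, ?_⟩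
      · rw [List.nodup_append']
        exact ⟨h.nd t, h.nd t', h.dis t t' hne⟩
      · intro v hv hv'
        obtain ⟨a, -, rfl⟩ := List.mem_map.1 hv
        rcases List.mem_append.1 hv' with hv' | hv'
        · exact h.avg t _ hv' a rfl
        · exact h.avg t' _ hv' a rfl
    · refine Av.perm ?_ pm.symm
      intro v hv a
      rcases hmem v hv with hv | hv | ⟨c, hc, rfl⟩
      · exact h.avf t v hv a
      · exact h.avf t' v hv a
      · rcases eq_or_lt_of_le hc.1 with h1 | h1
        · rw [← h1]; exact h.qg t a
        · exact arc_same ha hq1.1 h1 hc.2 a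
    · have e := length_pos' _ _ hlt
      simp only [List.length_append, List.length_cons, List.length_map, List.length_reverse]
      push_cast
      omega
    · intro v hv
      rcases hmem v (pm.mem_iff.1 hv) with hv | hv | ⟨c, hc, rfl⟩
      · exact Or.inl hv
      · exact Or.inr (Or.inl hv)
      · exact Or.inr (Or.inr ⟨c, Or.inl hc, rfl⟩)
  rcases lt_trichotomy (q t) (q t') with hlt | he | hlt
  · exact main t t' hlt ha
  · exact absurd (h.qinj _ _ he) hne
  · obtain ⟨Q, h1, h2, h3, h4, h5⟩ := main t' t hlt ha.symm
    refine ⟨Q.reverse, h1.symm, List.nodup_reverse.2 h2, fun v hv => h3 v (List.mem_reverse.1 hv), ?_, ?_⟩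
    · rw [List.length_reverse, h4]; omega
    · intro v hv
      rcases h5 v (List.mem_reverse.1 hv) with hv | hv | ⟨c, hc, rfl⟩
      · exact Or.inr (Or.inl hv)
      · exact Or.inl hv
      · exact Or.inr (Or.inr ⟨c, hc.symm, rfl⟩)

theorem PS.det_disj (h : PS G ℓ f g p q L) {t t' s s' : ι}
    (ht : arc g f (q t) = arc g f (q t')) (hs : arc g f (q s) = arc g f (q s'))
    (hts : arc g f (q t) ≠ arc g f (q s)) {Q Q' : List V} (hQ : DM g q L t t' Q)
    (hQ' : DM g q L s s' Q') : List.Disjoint Q Q' := by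
  have n1 : t ≠ s := by rintro rfl; exact hts rfl
  have n2 : t ≠ s' := by rintro rfl; exact hts hs.symm
  have n3 : t' ≠ s := by rintro rfl; exact hts ht
  have n4 : t' ≠ s' := by rintro rfl; exact hts (ht.trans hs.symm)
  intro v hv hv'
  have b1 := h.hq t
  have b2 := h.hq t'
  have b3 := h.hq s
  have b4 := h.hq s'
  rcases hQ v hv with hv | hv | ⟨c, hc, rfl⟩
  · rcases hQ' v hv' with hv' | hv' | ⟨c', hc', rfl⟩
    · exact h.dis _ _ n1 hv hv'
    · exact h.dis _ _ n2 hv hv'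
    · exact h.avg t _ hv c' rfl
  · rcases hQ' v hv' with hv' | hv' | ⟨c', hc', rfl⟩
    · exact h.dis _ _ n3 hv hv'
    · exact h.dis _ _ n4 hv hv'
    · exact h.avg t' _ hv c' rfl
  · rcases hQ' _ hv' with hv' | hv' | ⟨c', hc', he⟩
    · exact h.avg s _ hv' c rfl
    · exact h.avg s' _ hv' c rfl
    · have hcc : c = c' := h.hg.2.2.2 c c' he (by omega) (by omega)
      subst hcc
      apply hts
      have e1 : arc g f c = arc g f (q t) := by
        rcases hc with hc | hc
        · have := arc_mono g f hc.1; have := arc_mono g f hc.2; omega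
        · have := arc_mono g f hc.1; have := arc_mono g f hc.2; omega
      have e2 : arc g f c = arc g f (q s) := by
        rcases hc' with hc | hc
        · have := arc_mono g f hc.1; have := arc_mono g f hc.2; omega
        · have := arc_mono g f hc.1; have := arc_mono g f hc.2; omega
      omega

end
end LC

namespace LC
open SimpleGraph
section
variable {V : Type} {G : SimpleGraph V} {ι : Type} {ℓ : ℤ} {f g : ℤ → V} {p q : ι → ℤ} {L : ι → List V}

theorem PS.side1 (h : PS G ℓ f g p q L) (hM : MaxL G ℓ) {t t' : ι} (hne : t ≠ t')
    (hb : arc g f (q t) = arc g f (q t')) :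
    2 + ((L t).length : ℤ) + (L t').length + (max (q t) (q t') - min (q t) (q t')) ≤
      max (p t) (p t') - min (p t) (p t') := by
  have main : ∀ t t' : ι, p t < p t' → t ≠ t' → arc g f (q t) = arc g f (q t') →
    2 + ((L t).length : ℤ) + (L t').length + (max (q t) (q t') - min (q t) (q t')) ≤
      max (p t) (p t') - min (p t) (p t') := by
    intro t t' hlt hne hb
    obtain ⟨Q, h1, h2, h3, h4, h5⟩ := h.detour hne hb
    have b1 := h.hp t
    have b2 := h.hp t'
    have := ex1 h.hf hM hlt (by omega) h1 h2 h3 (by rintro rfl; simp at h4; omega)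
    omega
  rcases lt_trichotomy (p t) (p t') with hlt | he | hlt
  · exact main t t' hlt hne hb
  · exact absurd (h.pinj _ _ he) hne
  · have := main t' t hlt hne.symm hb.symm
    omega

theorem PS.inj (h : PS G ℓ f g p q L) (hM : MaxL G ℓ) {t t' : ι}
    (ha : arc f g (p t) = arc f g (p t'))
    (hb : arc g f (q t) = arc g f (q t')) : t = t' := by
  by_contra hne
  have h1 := h.side1 hM hne hb
  have h2 := h.symm.side1 hM hne ha
  simp only [List.length_reverse] at h2
  omega

theorem PS.side2 (h : PS G ℓ f g p q L) (hM : MaxL G ℓ) {t1 t2 t3 t4 : ι} {i i' j j' : ℕ}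
    (hi : i ≠ i') (hj : j ≠ j')
    (a1 : arc f g (p t1) = i) (a2 : arc f g (p t2) = i) (a3 : arc f g (p t3) = i')
    (a4 : arc f g (p t4) = i')
    (b1 : arc g f (q t1) = j) (b2 : arc g f (q t2) = j') (b3 : arc g f (q t3) = j)
    (b4 : arc g f (q t4) = j')
    (ho : p t1 < p t2 ↔ p t3 < p t4) :
    4 + ((L t1).length : ℤ) + (L t2).length + (L t3).length + (L t4).length
      + (max (q t1) (q t3) - min (q t1) (q t3)) + (max (q t2) (q t4) - min (q t2) (q t4)) ≤
      max (p t1) (p t2) - min (p t1) (p t2) + (max (p t3) (p t4) - min (p t3) (p t4)) := by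
  have n12 : t1 ≠ t2 := by rintro rfl; omega
  have n34 : t3 ≠ t4 := by rintro rfl; omega
  have n13 : t1 ≠ t3 := by rintro rfl; omega
  have n24 : t2 ≠ t4 := by rintro rfl; omega
  have p12 : p t1 ≠ p t2 := fun e => n12 (h.pinj _ _ e)
  have p34 : p t3 ≠ p t4 := fun e => n34 (h.pinj _ _ e)
  obtain ⟨Q, c1, c2, c3, c4, c5⟩ := h.detour n13 (b1.trans b3.symm)
  obtain ⟨Q', d1, d2, d3, d4, d5⟩ := h.detour n24 (b2.trans b4.symm)
  have dj := h.det_disj (b1.trans b3.symm) (b2.trans b4.symm) (by omega) c5 d5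
  have := ex2' h.hf hM (h.hp t1) (h.hp t2) (h.hp t3) (h.hp t4) (by
    rcases lt_or_gt_of_ne hi with hi | hi
    · left
      exact ⟨lt_of_arc (f := f) (g := g) (by omega), lt_of_arc (f := f) (g := g) (by omega),
        lt_of_arc (f := f) (g := g) (by omega), lt_of_arc (f := f) (g := g) (by omega)⟩
    · right
      exact ⟨lt_of_arc (f := f) (g := g) (by omega), lt_of_arc (f := f) (g := g) (by omega),
        lt_of_arc (f := f) (g := g) (by omega), lt_of_arc (f := f) (g := g) (by omega)⟩)
    (by omega) c1 d1 (List.nodup_append'.2 ⟨c2, d2, dj⟩)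
    (fun v hv => (List.mem_append.1 hv).elim (c3 v) (d3 v))
  omega

theorem PS.side3 (h : PS G ℓ f g p q L) (hM : MaxL G ℓ) {t1 t2 t3 t4 t5 t6 : ι} {z b b' w a a' : ℕ}
    (hzb : z ≠ b) (hzb' : z ≠ b') (hbb : b ≠ b') (hwa : w ≠ a) (hwa' : w ≠ a') (haa : a ≠ a')
    (a1 : arc f g (p t1) = z) (a2 : arc f g (p t2) = z) (a3 : arc f g (p t3) = b)
    (a4 : arc f g (p t4) = b) (a5 : arc f g (p t5) = b') (a6 : arc f g (p t6) = b')
    (b1 : arc g f (q t1) = a) (b2 : arc g f (q t2) = a') (b3 : arc g f (q t3) = a)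
    (b4 : arc g f (q t4) = w) (b5 : arc g f (q t5) = a') (b6 : arc g f (q t6) = w)
    (hs : b < z ↔ b' < z) (ho : p t1 < p t2 ↔ b < b') (ho' : p t3 < p t4 ↔ p t5 < p t6) :
    6 + ((L t1).length : ℤ) + (L t2).length + (L t3).length + (L t4).length + (L t5).length
      + (L t6).length
      + (max (q t1) (q t3) - min (q t1) (q t3)) + (max (q t2) (q t5) - min (q t2) (q t5))
      + (max (q t4) (q t6) - min (q t4) (q t6)) ≤
      max (p t1) (p t2) - min (p t1) (p t2) + (max (p t3) (p t4) - min (p t3) (p t4))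
      + (max (p t5) (p t6) - min (p t5) (p t6)) := by
  have n12 : t1 ≠ t2 := by rintro rfl; omega
  have n34 : t3 ≠ t4 := by rintro rfl; omega
  have n56 : t5 ≠ t6 := by rintro rfl; omega
  have n13 : t1 ≠ t3 := by rintro rfl; omega
  have n25 : t2 ≠ t5 := by rintro rfl; omega
  have n46 : t4 ≠ t6 := by rintro rfl; omega
  have p12 : p t1 ≠ p t2 := fun e => n12 (h.pinj _ _ e)
  have p34 : p t3 ≠ p t4 := fun e => n34 (h.pinj _ _ e)
  have p56 : p t5 ≠ p t6 := fun e => n56 (h.pinj _ _ e)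
  have lt : ∀ s t i j, arc f g (p s) = i → arc f g (p t) = j → i < j → p s < p t :=
    fun s t i j hi hj hij => lt_of_arc (f := f) (g := g) (by rw [hi, hj]; exact hij)
  have H1 : ((p t1 < p t3 ∧ p t1 < p t4 ∧ p t1 < p t5 ∧ p t1 < p t6) ∧
      (p t2 < p t3 ∧ p t2 < p t4 ∧ p t2 < p t5 ∧ p t2 < p t6)) ∨
      ((p t3 < p t1 ∧ p t4 < p t1 ∧ p t5 < p t1 ∧ p t6 < p t1) ∧
      (p t3 < p t2 ∧ p t4 < p t2 ∧ p t5 < p t2 ∧ p t6 < p t2)) := by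
    by_cases hbz : b < z
    · right
      have hbz' := hs.1 hbz
      exact ⟨⟨lt _ _ _ _ a3 a1 hbz, lt _ _ _ _ a4 a1 hbz, lt _ _ _ _ a5 a1 hbz', lt _ _ _ _ a6 a1 hbz'⟩,
        ⟨lt _ _ _ _ a3 a2 hbz, lt _ _ _ _ a4 a2 hbz, lt _ _ _ _ a5 a2 hbz', lt _ _ _ _ a6 a2 hbz'⟩⟩
    · left
      have hbz' : z < b' := lt_of_le_of_ne (not_lt.1 (mt hs.2 hbz)) hzb'
      have hbz : z < b := lt_of_le_of_ne (not_lt.1 hbz) hzb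
      exact ⟨⟨lt _ _ _ _ a1 a3 hbz, lt _ _ _ _ a1 a4 hbz, lt _ _ _ _ a1 a5 hbz', lt _ _ _ _ a1 a6 hbz'⟩,
        ⟨lt _ _ _ _ a2 a3 hbz, lt _ _ _ _ a2 a4 hbz, lt _ _ _ _ a2 a5 hbz', lt _ _ _ _ a2 a6 hbz'⟩⟩
  have H2 : (p t1 < p t2 ∧ p t3 < p t5 ∧ p t3 < p t6 ∧ p t4 < p t5 ∧ p t4 < p t6) ∨
      (p t2 < p t1 ∧ p t5 < p t3 ∧ p t6 < p t3 ∧ p t5 < p t4 ∧ p t6 < p t4) := by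
    rcases lt_or_gt_of_ne hbb with hb | hb
    · left
      exact ⟨ho.2 hb, lt _ _ _ _ a3 a5 hb, lt _ _ _ _ a3 a6 hb, lt _ _ _ _ a4 a5 hb, lt _ _ _ _ a4 a6 hb⟩
    · right
      exact ⟨lt_of_le_of_ne (not_lt.1 (mt ho.1 (not_lt.2 hb.le))) p12.symm,
        lt _ _ _ _ a5 a3 hb, lt _ _ _ _ a6 a3 hb, lt _ _ _ _ a5 a4 hb, lt _ _ _ _ a6 a4 hb⟩
  have H3 : (p t3 < p t4 ∧ p t5 < p t6) ∨ (p t4 < p t3 ∧ p t6 < p t5) := by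
    clear H1 H2
    omega
  obtain ⟨Q, c1, c2, c3, c4, c5⟩ := h.detour n13 (b1.trans b3.symm)
  obtain ⟨Q', d1, d2, d3, d4, d5⟩ := h.detour n25 (b2.trans b5.symm)
  obtain ⟨W, e1, e2, e3, e4, e5⟩ := h.detour n46 (b4.trans b6.symm)
  have dj1 := h.det_disj (b1.trans b3.symm) (b2.trans b5.symm) (by rw [b1, b2]; exact haa) c5 d5
  have dj2 := h.det_disj (b1.trans b3.symm) (b4.trans b6.symm) (by rw [b1, b4]; exact hwa.symm) c5 e5
  have dj3 := h.det_disj (b2.trans b5.symm) (b4.trans b6.symm) (by rw [b2, b4]; exact hwa'.symm) d5 e5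
  have := ex3' h.hf hM (h.hp t1) (h.hp t2) (h.hp t3) (h.hp t4) (h.hp t5) (h.hp t6) H1 H2 H3 c1 d1 e1 (by
      rw [List.nodup_append', List.nodup_append']
      refine ⟨⟨c2, d2, dj1⟩, e2, ?_⟩
      intro v hv hv'
      rcases List.mem_append.1 hv with hv | hv
      · exact dj2 hv hv'
      · exact dj3 hv hv')
    (by
      intro v hv
      rcases List.mem_append.1 hv with hv | hv
      · rcases List.mem_append.1 hv with hv | hv
        · exact c3 v hv
        · exact d3 v hv
      · exact e3 v hv)
  rw [c4, d4, e4] at this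
  linarith

set_option maxHeartbeats 1000000 in
theorem PS.bound [Fintype ι] (h : PS G ℓ f g p q L) (hM : MaxL G ℓ) {k : ℕ}
    (hk : arc f g (ℓ - 1) ≤ k) (hk' : arc g f (ℓ - 1) ≤ k) :
    (Fintype.card ι) ^ 5 < 2 ^ 25 * (k + 1) ^ 8 := by
  classical
  by_contra hc
  push Not at hc
  let φ : ι → ℕ × ℕ := fun t => (arc f g (p t), arc g f (q t))
  have hφ : Function.Injective φ := by
    intro t t' htt
    simp only [φ, Prod.mk.injEq] at htt
    exact h.inj hM htt.1 htt.2
  rcases isEmpty_or_nonempty ι with hι | hι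
  · rw [Fintype.card_eq_zero] at hc
    have : 0 < (k+1)^8 := by positivity
    omega
  let E : Finset (ℕ × ℕ) := Finset.univ.image φ
  let ψ : ℕ → ℕ → ι := fun i j => Function.invFun φ (i, j)
  have hψ : ∀ i j, (i, j) ∈ E → arc f g (p (ψ i j)) = i ∧ arc g f (q (ψ i j)) = j := by
    intro i j hij
    obtain ⟨t, -, ht⟩ := Finset.mem_image.1 hij
    have : φ (ψ i j) = (i, j) := Function.invFun_eq ⟨t, ht⟩
    simpa [φ] using this
  have hcard : E.card = Fintype.card ι := by
    rw [Finset.card_image_of_injective _ hφ]; rfl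
  have hE : ∀ e ∈ E, e.1 < k + 1 ∧ e.2 < k + 1 := by
    intro e he
    obtain ⟨t, -, rfl⟩ := Finset.mem_image.1 he
    have b1 := h.hp t
    have b2 := h.hq t
    have := arc_mono f g (show p t ≤ ℓ - 1 by omega)
    have := arc_mono g f (show q t ≤ ℓ - 1 by omega)
    simp only [φ]; omega
  rcases comb (Nat.succ_pos k) E (fun i j => p (ψ i j)) (fun i j => q (ψ i j)) hE (by
    rw [hcard]; exact hc) with hg | hg
  · obtain ⟨i, i', j, j', hi, hj, e1, e2, e3, e4, o1, o2⟩ := hg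
    have s1 := h.side2 hM hi hj (hψ _ _ e1).1 (hψ _ _ e2).1 (hψ _ _ e3).1 (hψ _ _ e4).1
      (hψ _ _ e1).2 (hψ _ _ e2).2 (hψ _ _ e3).2 (hψ _ _ e4).2 o1
    have s2 := h.symm.side2 hM hj hi (hψ _ _ e1).2 (hψ _ _ e3).2 (hψ _ _ e2).2 (hψ _ _ e4).2
      (hψ _ _ e1).1 (hψ _ _ e3).1 (hψ _ _ e2).1 (hψ _ _ e4).1 o2
    simp only [List.length_reverse] at s2
    linarith
  · obtain ⟨z, b, b', w, a, a', n1, n2, n3, n4, n5, n6, e1, e2, e3, e5, e4, e6, o1, o2, o3, o4, o5, o6⟩ := hg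
    have s1 := h.side3 hM n1 n2 n3 n4 n5 n6 (hψ _ _ e1).1 (hψ _ _ e2).1 (hψ _ _ e3).1 (hψ _ _ e4).1
      (hψ _ _ e5).1 (hψ _ _ e6).1
      (hψ _ _ e1).2 (hψ _ _ e2).2 (hψ _ _ e3).2 (hψ _ _ e4).2 (hψ _ _ e5).2 (hψ _ _ e6).2 o1 o3 o4
    have s2 := h.symm.side3 hM n4 n5 n6 n1 n2 n3 (hψ _ _ e4).2 (hψ _ _ e6).2 (hψ _ _ e3).2
      (hψ _ _ e1).2 (hψ _ _ e5).2 (hψ _ _ e2).2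
      (hψ _ _ e4).1 (hψ _ _ e6).1 (hψ _ _ e3).1
      (hψ _ _ e1).1 (hψ _ _ e5).1 (hψ _ _ e2).1 o2 o5 o6
    simp only [List.length_reverse] at s2
    rw [max_comm (p (ψ b w)) (p (ψ b a)), min_comm (p (ψ b w)) (p (ψ b a)), max_comm (p (ψ b' w)) (p (ψ b' a')), min_comm (p (ψ b' w)) (p (ψ b' a')), max_comm (q (ψ b a)) (q (ψ z a)), min_comm (q (ψ b a)) (q (ψ z a)), max_comm (q (ψ b' a')) (q (ψ z a')), min_comm (q (ψ b' a')) (q (ψ z a'))] at s2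
    linarith

theorem PS.bound0 [Fintype ι] (h : PS G ℓ f g p q L) (hM : MaxL G ℓ) 
    (hk : arc f g (ℓ - 1) = 0) (hk' : arc g f (ℓ - 1) = 0) :
    Fintype.card ι ≤ 1 := by
  rw [Fintype.card_le_one_iff]
  intro t t'
  have b1 := h.hp t
  have b2 := h.hq t
  have b1' := h.hp t'
  have b2' := h.hq t'
  have := arc_mono f g (show p t ≤ ℓ - 1 by omega)
  have := arc_mono g f (show q t ≤ ℓ - 1 by omega)
  have := arc_mono f g (show p t' ≤ ℓ - 1 by omega)
  have := arc_mono g f (show q t' ≤ ℓ - 1 by omega)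
  exact h.inj hM (by omega) (by omega)
end
end LC

namespace LC
open SimpleGraph
section
variable {V : Type} {G : SimpleGraph V}

theorem Ch.split {s t c : V} {L1 L2 : List V} (h : Ch G s (L1 ++ c :: L2) t) :
    Ch G s L1 c ∧ Ch G c L2 t := by
  unfold Ch at *
  rw [show s :: (L1 ++ c :: L2) ++ [t] = (s :: L1) ++ c :: (L2 ++ [t]) by simp, List.isChain_split] at h
  exact h

theorem not_nodup_split {α : Type} : ∀ {L : List α}, ¬ L.Nodup →
    ∃ L1 x L2 L3, L = L1 ++ x :: (L2 ++ x :: L3) := by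
  intro L
  induction L with
  | nil => intro h; simp at h
  | cons a l ih =>
    intro h
    by_cases ha : a ∈ l
    · obtain ⟨L2, L3, rfl⟩ := List.append_of_mem ha
      exact ⟨[], a, L2, L3, rfl⟩
    · have : ¬ l.Nodup := fun hl => h (List.nodup_cons.2 ⟨ha, hl⟩)
      obtain ⟨L1, x, L2, L3, rfl⟩ := ih this
      exact ⟨a :: L1, x, L2, L3, rfl⟩

theorem trim (C D P : Set V) : ∀ (n : ℕ) (s t : V) (L : List V), L.length ≤ n → Ch G s L t →
    s ∈ C → t ∈ D → s ∈ P → t ∈ P → (∀ v ∈ L, v ∈ P) →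
    ∃ s t L, Ch G s L t ∧ s ∈ C ∧ t ∈ D ∧ s ∈ P ∧ t ∈ P ∧ (∀ v ∈ L, v ∈ P) ∧ L.Nodup ∧
      (∀ v ∈ L, v ∉ C) ∧ (∀ v ∈ L, v ∉ D) := by
  intro n
  induction n with
  | zero =>
    intro s t L hL hc hs ht hsP htP hP
    have : L = [] := List.length_eq_zero_iff.1 (by omega)
    subst this
    exact ⟨s, t, [], hc, hs, ht, hsP, htP, hP, by simp, by simp, by simp⟩
  | succ n ih =>
    intro s t L hL hc hs ht hsP htP hP
    by_cases h1 : L.Nodup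
    · by_cases h2 : ∀ v ∈ L, v ∉ C
      · by_cases h3 : ∀ v ∈ L, v ∉ D
        · exact ⟨s, t, L, hc, hs, ht, hsP, htP, hP, h1, h2, h3⟩
        · push Not at h3
          obtain ⟨v, hv, hvD⟩ := h3
          obtain ⟨L1, L2, rfl⟩ := List.append_of_mem hv
          refine ih s v L1 ?_ hc.split.1 hs hvD hsP (hP v hv) (fun x hx => hP x (by simp [hx]))
          simp at hL; omega
      · push Not at h2
        obtain ⟨v, hv, hvC⟩ := h2
        obtain ⟨L1, L2, rfl⟩ := List.append_of_mem hv
        refine ih v t L2 ?_ hc.split.2 hvC ht (hP v hv) htP (fun x hx => hP x (by simp [hx]))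
        simp at hL; omega
    · obtain ⟨L1, x, L2, L3, rfl⟩ := not_nodup_split h1
      refine ih s t (L1 ++ x :: L3) ?_ (hc.split.1.trans hc.split.2.split.2) hs ht hsP htP ?_
      · simp at hL ⊢; omega
      · intro y hy; apply hP; simp at hy ⊢; tauto

theorem Cyc.mod {ℓ : ℤ} {f : ℤ → V} (hf : Cyc G ℓ f) (a : ℤ) : ∃ b, 0 ≤ b ∧ b < ℓ ∧ f b = f a := by
  have h3 := hf.1
  refine ⟨a % ℓ, Int.emod_nonneg _ (by omega), Int.emod_lt_of_pos _ (by omega), ?_⟩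
  have hp : Function.Periodic f ℓ := hf.2.1
  have := hp.sub_zsmul_eq (x := a) (a / ℓ)
  rw [← this]; congr 1
  rw [Int.emod_def]; simp; ring

variable [Fintype V] [DecidableEq V]

open Classical in
noncomputable def arcs (G : SimpleGraph V) : Finset (V × V) := Finset.univ.filter (fun e => G.Adj e.1 e.2)

open Classical in
noncomputable def rg (f : ℤ → V) : Finset V := Finset.univ.filter (fun v => ∃ a, f a = v)

theorem mem_rg {f : ℤ → V} {v : V} : v ∈ rg f ↔ ∃ a, f a = v := by simp [rg]

theorem arc_le {ℓ : ℤ} {f g : ℤ → V} (hf : Cyc G ℓ f) : arc f g (ℓ - 1) ≤ (rg f ∩ rg g).card := by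
  classical
  unfold arc
  refine Finset.card_le_card_of_injOn f ?_ ?_
  · intro c hc
    simp only [Finset.coe_filter, Set.mem_ofPred_eq] at hc
    simp only [Finset.coe_inter, Set.mem_inter_iff, Finset.mem_coe, mem_rg]
    exact ⟨⟨c, rfl⟩, hc.2⟩
  · intro c hc d hd hcd
    simp only [Finset.coe_filter, Set.mem_ofPred_eq, Finset.mem_Icc] at hc hd
    exact hf.2.2.2 c d hcd (by omega) (by omega)

theorem exists_PS {ℓ : ℤ} {f g : ℤ → V} (hf : Cyc G ℓ f) (hg : Cyc G ℓ g) (m : ℕ)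
    (h : ∀ S, Sep (arcs G) (rg f) (rg g) S → m + (rg f ∩ rg g).card ≤ S.card) :
    ∃ (ι : Type) (_ : Fintype ι) (p q : ι → ℤ) (L : ι → List V), PS G ℓ f g p q L ∧ m ≤ Fintype.card ι := by
  classical
  obtain ⟨P, hP, hd⟩ := menger _ _ _ _ h
  have hsub : ∀ i : {i // ∀ v ∈ P i, v ∉ rg f ∩ rg g}, ∃ s t L, Ch G s L t ∧ s ∈ {v | ∃ a, f a = v} ∧
      t ∈ {v | ∃ a, g a = v} ∧ s ∈ {v | v ∈ P i} ∧ t ∈ {v | v ∈ P i} ∧ (∀ v ∈ L, v ∈ {v | v ∈ P i}) ∧ L.Nodup ∧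
      (∀ v ∈ L, v ∉ {v | ∃ a, f a = v}) ∧ (∀ v ∈ L, v ∉ {v | ∃ a, g a = v}) := by
    rintro ⟨i, hi⟩
    obtain ⟨hc, ⟨a, ha, ha'⟩, ⟨b, hb, hb'⟩⟩ := hP i
    obtain ⟨l, hl⟩ : ∃ l, P i = a :: l := by
      cases hPi : P i with
      | nil => simp [hPi] at ha'
      | cons x l => simp [hPi] at ha'; exact ⟨l, by rw [ha']⟩
    rcases List.eq_nil_or_concat l with rfl | ⟨l', x, rfl⟩
    · rw [hl] at hb'; simp at hb'
      exact absurd (Finset.mem_inter.2 ⟨ha, hb' ▸ hb⟩) (hi a (by rw [hl]; simp))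
    · have hx : x = b := by
        rw [hl] at hb'
        rw [List.concat_eq_append, ← List.cons_append] at hb'
        rw [List.getLast?_append] at hb'
        simpa using hb'
      subst hx
      refine trim _ _ {v | v ∈ P i} l'.length a x l' le_rfl ?_ (mem_rg.1 ha) (mem_rg.1 hb) ?_ ?_ ?_
      · unfold Ch
        rw [hl, List.concat_eq_append, ← List.cons_append] at hc
        exact hc.imp (fun u v huv => by simpa [arcs] using huv)
      · simp [hl]
      · simp [hl]
      · intro v hv; simp [hl, hv]
  choose s t L h1 h2 h3 h4 h5 h6 h7 h8 h9 using hsub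
  have hp : ∀ i, ∃ b, 0 ≤ b ∧ b < ℓ ∧ f b = s i := by
    intro i; obtain ⟨a, ha⟩ := h2 i
    obtain ⟨b, hb⟩ := hf.mod a
    exact ⟨b, hb.1, hb.2.1, hb.2.2.trans ha⟩
  have hq : ∀ i, ∃ b, 0 ≤ b ∧ b < ℓ ∧ g b = t i := by
    intro i; obtain ⟨a, ha⟩ := h3 i
    obtain ⟨b, hb⟩ := hg.mod a
    exact ⟨b, hb.1, hb.2.1, hb.2.2.trans ha⟩
  choose p hp0 hp1 hp2 using hp
  choose q hq0 hq1 hq2 using hq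
  refine ⟨_, inferInstance, p, q, L, ⟨hf, hg, fun i => ⟨hp0 i, hp1 i⟩, fun i => ⟨hq0 i, hq1 i⟩,
    ?_, h7, ?_, ?_, ?_, ?_, ?_, ?_, ?_⟩, ?_⟩
  · intro i; rw [hp2, hq2]; exact h1 i
  · intro i v hv a hav; exact h8 i v hv ⟨a, hav⟩
  · intro i v hv a hav; exact h9 i v hv ⟨a, hav⟩
  · intro i a ha
    exact i.2 (s i) (h4 i) (Finset.mem_inter.2 ⟨mem_rg.2 ⟨_, hp2 i⟩, mem_rg.2 ⟨a, ha.trans (hp2 i)⟩⟩)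
  · intro i a ha
    exact i.2 (t i) (h5 i) (Finset.mem_inter.2 ⟨mem_rg.2 ⟨a, ha.trans (hq2 i)⟩, mem_rg.2 ⟨_, hq2 i⟩⟩)
  · intro i j hij v hv hv'
    exact hd i j (fun e => hij (Subtype.ext e)) (h6 i v hv) (h6 j v hv')
  · intro i j hij
    by_contra hne
    have e : s i = s j := by rw [← hp2, ← hp2, hij]
    exact hd i j (fun e => hne (Subtype.ext e)) (h4 i) (by rw [e]; exact h4 j)
  · intro i j hij
    by_contra hne
    have e : t i = t j := by rw [← hq2, ← hq2, hij]
    exact hd i j (fun e => hne (Subtype.ext e)) (h5 i) (by rw [e]; exact h5 j)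
  · have hc : Fintype.card {i // ¬ ∀ v ∈ P i, v ∉ rg f ∩ rg g} ≤ (rg f ∩ rg g).card := by
      have : ∀ i : {i // ¬ ∀ v ∈ P i, v ∉ rg f ∩ rg g}, ∃ v, v ∈ P i ∧ v ∈ rg f ∩ rg g := by
        rintro ⟨i, hi⟩; push Not at hi; exact hi
      choose w hw hw' using this
      rw [← Finset.card_univ]
      refine Finset.card_le_card_of_injOn w (fun i _ => hw' i) ?_
      intro i _ j _ hij
      by_contra hne
      exact hd i j (fun e => hne (Subtype.ext e)) (hw i) (by rw [hij]; exact hw j)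
    have := Fintype.card_subtype_compl (fun i => ∀ v ∈ P i, v ∉ rg f ∩ rg g)
    rw [Fintype.card_fin] at this
    omega

theorem sep_bound {ℓ : ℤ} {f g : ℤ → V} (hf : Cyc G ℓ f) (hg : Cyc G ℓ g) (hM : MaxL G ℓ) (m : ℕ)
    (hm : 2 ^ 25 * ((rg f ∩ rg g).card + 1) ^ 8 ≤ m ^ 5) :
    ∃ S, Sep (arcs G) (rg f) (rg g) S ∧ S.card < m + (rg f ∩ rg g).card := by
  by_contra hc
  push Not at hc
  obtain ⟨ι, _, p, q, L, hPS, hι⟩ := exists_PS hf hg m hc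
  have := hPS.bound hM (arc_le hf) (by rw [Finset.inter_comm]; exact arc_le hg)
  have h2 := Nat.pow_le_pow_left hι 5
  omega

theorem sep_bound0 {ℓ : ℤ} {f g : ℤ → V} (hf : Cyc G ℓ f) (hg : Cyc G ℓ g) (hM : MaxL G ℓ)
    (h0 : (rg f ∩ rg g).card = 0) :
    ∃ S, Sep (arcs G) (rg f) (rg g) S ∧ S.card ≤ 1 := by
  by_contra hc
  push Not at hc
  obtain ⟨ι, _, p, q, L, hPS, hι⟩ := exists_PS hf hg 2 (by
    intro S hS; have := hc S hS; omega)
  have := hPS.bound0 hM (by have := arc_le (g := g) hf; omega)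
    (by have := arc_le (g := f) hg; rw [Finset.inter_comm] at this; omega)
  omega

end
end LC

namespace LC
open SimpleGraph
open scoped Pointwise
section
variable {Γ V : Type} [Group Γ] [Fintype Γ] [MulAction Γ V] [MulAction.IsPretransitive Γ V]
  [Fintype V] [DecidableEq V]

theorem count_eq (x y : V) :
    Fintype.card V * (Finset.univ.filter (fun g : Γ => g • x = y)).card = Fintype.card Γ := by
  have h1 : ∀ y', (Finset.univ.filter (fun g : Γ => g • x = y')).card =
      (Finset.univ.filter (fun g : Γ => g • x = y)).card := by
    intro y'
    obtain ⟨h, hh⟩ := MulAction.exists_smul_eq Γ y' y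
    refine Finset.card_bij (fun g _ => h * g) ?_ ?_ ?_
    · intro g hg; simp at hg ⊢; rw [mul_smul, hg, hh]
    · intro a _ b _ hab; exact mul_left_cancel hab
    · intro b hb
      simp at hb
      refine ⟨h⁻¹ * b, ?_, by simp⟩
      simp [mul_smul, hb, ← hh]
  have h2 := Finset.card_eq_sum_card_fiberwise (s := (Finset.univ : Finset Γ)) (t := (Finset.univ : Finset V))
    (f := fun g => g • x) (fun _ _ => Finset.mem_coe.2 (Finset.mem_univ _))
  simp only [h1, Finset.sum_const, smul_eq_mul, Finset.card_univ] at h2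
  exact h2.symm

theorem avg (A B : Finset V) :
    Fintype.card V * ∑ g : Γ, (A ∩ g • B).card = Fintype.card Γ * (A.card * B.card) := by
  have h : ∀ g : Γ, (A ∩ g • B).card = ∑ a ∈ A, ∑ b ∈ B, if g • b = a then 1 else 0 := by
    intro g
    rw [Finset.card_eq_sum_ones, ← Finset.filter_mem_eq_inter, Finset.sum_filter]
    refine Finset.sum_congr rfl (fun a _ => ?_)
    by_cases ha : a ∈ g • B
    · rw [if_pos ha]
      obtain ⟨b, hb, rfl⟩ := Finset.mem_smul_finset.1 ha
      simp [hb]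
    · rw [if_neg ha]
      symm
      refine Finset.sum_eq_zero (fun b hb => ?_)
      rw [if_neg]; rintro rfl; exact ha (Finset.smul_mem_smul_finset hb)
  simp only [h]
  rw [Finset.sum_comm, Finset.mul_sum]
  have h2 : ∀ a ∈ A, Fintype.card V * ∑ g : Γ, (∑ b ∈ B, if g • b = a then 1 else 0) = Fintype.card Γ * B.card := by
    intro a _
    rw [Finset.sum_comm, Finset.mul_sum]
    have : ∀ b ∈ B, Fintype.card V * ∑ g : Γ, (if g • b = a then 1 else 0) = Fintype.card Γ := by
      intro b _
      rw [← Finset.sum_filter, ← Finset.card_eq_sum_ones]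
      exact count_eq b a
    rw [Finset.sum_congr rfl this]; simp [mul_comm]
  rw [Finset.sum_congr rfl h2]; simp; ring

theorem exists_small (A B : Finset V) : ∃ g : Γ, Fintype.card V * (A ∩ g • B).card ≤ A.card * B.card := by
  by_contra hc
  push Not at hc
  have h := avg (Γ := Γ) A B
  have : ∑ g : Γ, (A.card * B.card) < ∑ g : Γ, Fintype.card V * (A ∩ g • B).card :=
    Finset.sum_lt_sum_of_nonempty Finset.univ_nonempty (fun g _ => hc g)
  simp only [Finset.sum_const, Finset.card_univ, smul_eq_mul] at this
  rw [← Finset.mul_sum, h] at this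
  exact lt_irrefl _ this

theorem hit (A B : Finset V) :
    Fintype.card V * (Finset.univ.filter (fun g : Γ => (A ∩ g • B).Nonempty)).card ≤
      Fintype.card Γ * (A.card * B.card) := by
  rw [← avg (Γ := Γ) A B]
  refine Nat.mul_le_mul_left _ ?_
  rw [Finset.card_eq_sum_ones, Finset.sum_filter]
  refine Finset.sum_le_sum (fun g _ => ?_)
  split_ifs with h
  · exact Finset.card_pos.2 h
  · exact Nat.zero_le _

theorem land (x : V) (P : Finset V) :
    Fintype.card V * (Finset.univ.filter (fun g : Γ => g • x ∈ P)).card = Fintype.card Γ * P.card := by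
  have h2 := Finset.card_eq_sum_card_fiberwise (s := (Finset.univ.filter (fun g : Γ => g • x ∈ P))) (t := P)
    (f := fun g => g • x) (fun g hg => by simpa using hg)
  rw [h2, Finset.mul_sum]
  have : ∀ y ∈ P, Fintype.card V * (Finset.filter (fun g : Γ => g • x = y) (Finset.univ.filter (fun g : Γ => g • x ∈ P))).card = Fintype.card Γ := by
    intro y hy
    rw [← count_eq (Γ := Γ) x y, Finset.filter_filter]
    congr 3
    ext g
    constructor
    · exact fun h => h.2
    · rintro rfl; exact ⟨hy, rfl⟩
  rw [Finset.sum_congr rfl this]; simp [mul_comm]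

def IsS (G : SimpleGraph V) (P Q : Finset V) : Prop :=
  P ∪ Q = Finset.univ ∧ ∀ u v, u ∈ P → u ∉ Q → v ∈ Q → v ∉ P → ¬ G.Adj u v

variable {G : SimpleGraph V}

theorem submod (P P' Q Q' : Finset V) :
    ((P ∩ P') ∩ (Q ∪ Q')).card + ((P ∪ P') ∩ (Q ∩ Q')).card ≤ (P ∩ Q).card + (P' ∩ Q').card := by
  rw [← Finset.card_union_add_card_inter, ← Finset.card_union_add_card_inter (P ∩ Q)]
  refine Nat.add_le_add (Finset.card_le_card ?_) (Finset.card_le_card ?_)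
  · intro v; simp only [Finset.mem_union, Finset.mem_inter]; tauto
  · intro v; simp only [Finset.mem_union, Finset.mem_inter]; tauto

theorem IsS.cov {P Q : Finset V} (h : IsS G P Q) (v : V) : v ∈ P ∨ v ∈ Q := by
  have : v ∈ P ∪ Q := by rw [h.1]; exact Finset.mem_univ _
  exact Finset.mem_union.1 this

theorem IsS.symm {P Q : Finset V} (h : IsS G P Q) : IsS G Q P :=
  ⟨by rw [Finset.union_comm]; exact h.1, fun u v h1 h2 h3 h4 h5 => h.2 v u h3 h4 h1 h2 h5.symm⟩

theorem IsS.inter {P Q P' Q' : Finset V} (h : IsS G P Q) (h' : IsS G P' Q') :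
    IsS G (P ∩ P') (Q ∪ Q') := by
  constructor
  · ext v
    have := h.cov v; have := h'.cov v
    simp only [Finset.mem_union, Finset.mem_inter, Finset.mem_univ]; tauto
  · intro u v h1 h2 h3 h4 h5
    simp only [Finset.mem_union, Finset.mem_inter, not_or, not_and] at h1 h2 h3 h4
    by_cases hv : v ∈ P
    · exact h'.2 u v h1.2 h2.2 ((h'.cov v).resolve_left (h4 hv)) (h4 hv) h5
    · exact h.2 u v h1.1 h2.1 ((h.cov v).resolve_left hv) hv h5

theorem IsS.smul (hadj : ∀ (g : Γ) (u v : V), G.Adj (g • u) (g • v) ↔ G.Adj u v) {P Q : Finset V}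
    (h : IsS G P Q) (g : Γ) : IsS G (g • P) (g • Q) := by
  constructor
  · rw [← Finset.smul_finset_union, h.1, Finset.smul_finset_univ]
  · intro u v
    simp only [← Finset.inv_smul_mem_iff]
    intro h1 h2 h3 h4 h5
    exact h.2 _ _ h1 h2 h3 h4 ((hadj _ _ _).2 h5)

end
end LC

namespace LC
open SimpleGraph
open scoped Pointwise
section
variable {Γ V : Type} [Group Γ] [Fintype Γ] [MulAction Γ V] [MulAction.IsPretransitive Γ V]
  [Fintype V] [DecidableEq V]

theorem pick1 (x : V) (A B P : Finset V) (h : A.card * B.card < P.card) :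
    ∃ g : Γ, g • x ∈ P ∧ A ∩ g • B = ∅ := by
  by_contra hc
  push Not at hc
  have h1 : (Finset.univ.filter (fun g : Γ => g • x ∈ P)).card ≤
      (Finset.univ.filter (fun g : Γ => (A ∩ g • B).Nonempty)).card := by
    refine Finset.card_le_card (fun g hg => ?_)
    simp only [Finset.mem_filter, Finset.mem_univ, true_and] at hg ⊢
    exact hc g hg
  have h2 := Nat.mul_le_mul_left (Fintype.card V) h1
  rw [land (Γ := Γ)] at h2
  have h3 := h2.trans (hit (Γ := Γ) A B)
  have h4 := Nat.le_of_mul_le_mul_left h3 Fintype.card_pos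
  omega

variable {G : SimpleGraph V}

def HConn (G : SimpleGraph V) (C : Finset V) : Prop :=
  ∀ P Q, IsS G P Q → C ∩ (P ∩ Q) = ∅ → (∃ v ∈ C, v ∈ P) → C ⊆ P

theorem landC (hadj : ∀ (g : Γ) (u v : V), G.Adj (g • u) (g • v) ↔ G.Adj u v) {C : Finset V}
    (hC : C.Nonempty) (hconn : HConn G C) {P Q : Finset V} (h : IsS G P Q)
    (hlt : (P ∩ Q).card * C.card < (P \ Q).card) : ∃ g : Γ, g • C ⊆ P \ Q := by
  obtain ⟨x, hx⟩ := hC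
  obtain ⟨g, hg, hg2⟩ := pick1 (Γ := Γ) x (P ∩ Q) C (P \ Q) hlt
  have h1 := hconn _ _ (h.smul hadj g⁻¹) (by
    rw [← Finset.smul_finset_inter, Finset.eq_empty_iff_forall_notMem]
    intro v hv
    rw [Finset.mem_inter, ← Finset.inv_smul_mem_iff, inv_inv] at hv
    have : g • v ∈ P ∩ Q ∩ g • C := Finset.mem_inter.2 ⟨hv.2, Finset.smul_mem_smul_finset hv.1⟩
    rw [hg2] at this; simp at this) ⟨x, hx, by
      rw [← Finset.inv_smul_mem_iff, inv_inv]; exact (Finset.mem_sdiff.1 hg).1⟩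
  refine ⟨g, fun v hv => ?_⟩
  obtain ⟨w, hw, rfl⟩ := Finset.mem_smul_finset.1 hv
  have h2 := h1 hw
  rw [← Finset.inv_smul_mem_iff, inv_inv] at h2
  refine Finset.mem_sdiff.2 ⟨h2, fun h3 => ?_⟩
  have : g • w ∈ P ∩ Q ∩ g • C := Finset.mem_inter.2 ⟨Finset.mem_inter.2 ⟨h2, h3⟩, hv⟩
  rw [hg2] at this; simp at this

theorem iso (hadj : ∀ (g : Γ) (u v : V), G.Adj (g • u) (g • v) ↔ G.Adj u v) {C : Finset V}
    (hC : C.Nonempty) (hconn : HConn G C) (hint : ∀ g : Γ, (C ∩ g • C).Nonempty)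
    {P Q : Finset V} (h : IsS G P Q)
    (hlt : (P ∩ Q).card * C.card < (Q \ P).card) : (P \ Q).card ≤ (P ∩ Q).card * C.card := by
  by_contra hc
  push Not at hc
  obtain ⟨g, hg⟩ := landC (Γ := Γ) hadj hC hconn h hc
  obtain ⟨k, hk⟩ := landC (Γ := Γ) hadj hC hconn h.symm (by rwa [Finset.inter_comm])
  obtain ⟨v, hv⟩ := hint (g⁻¹ * k)
  rw [Finset.mem_inter, mul_smul, ← Finset.inv_smul_mem_iff, inv_inv] at hv
  have h1 := hg (Finset.smul_mem_smul_finset hv.1)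
  have h2 := hk hv.2
  simp only [Finset.mem_sdiff] at h1 h2
  exact h1.2 h2.1

theorem IsS.card_eq {P Q : Finset V} (h : IsS G P Q) : (Q \ P).card + P.card = Fintype.card V := by
  rw [Finset.card_sdiff_add_card, Finset.union_comm, h.1, Finset.card_univ]

/-- the minimisation part -/
theorem sep_large0 (hadj : ∀ (g : Γ) (u v : V), G.Adj (g • u) (g • v) ↔ G.Adj u v) {C : Finset V}
    (hC : C.Nonempty) (hconn : HConn G C) (hint : ∀ g : Γ, (C ∩ g • C).Nonempty)
    {P0 Q0 : Finset V} (h0 : IsS G P0 Q0) (hCP : C ⊆ P0) (hP : 2 * P0.card ≤ Fintype.card V) {t : ℕ}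
    (ht : (P0 ∩ Q0).card ≤ t) : Fintype.card V ≤ 8 * (C.card * t) := by
  classical
  by_contra hlt
  push Not at hlt
  let F : Finset (Finset V × Finset V) := Finset.univ.filter
    (fun p => IsS G p.1 p.2 ∧ C ⊆ p.1 ∧ 2 * p.1.card ≤ Fintype.card V ∧ (p.1 ∩ p.2).card ≤ t)
  have hF : ∀ P Q, (P, Q) ∈ F ↔ (IsS G P Q ∧ C ⊆ P ∧ 2 * P.card ≤ Fintype.card V ∧ (P ∩ Q).card ≤ t) := by
    intro P Q; simp [F]
  obtain ⟨⟨P, Q⟩, hPQ, hmin⟩ := Finset.exists_min_image F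
    (fun p => (p.1 ∩ p.2).card * (Fintype.card V + 1) + (Fintype.card V - p.1.card))
    ⟨(P0, Q0), (hF _ _).2 ⟨h0, hCP, hP, ht⟩⟩
  obtain ⟨hS, hC1, hP1, ht1⟩ := (hF _ _).1 hPQ
  have hmin' : ∀ P' Q', IsS G P' Q' → C ⊆ P' → 2 * P'.card ≤ Fintype.card V → (P' ∩ Q').card ≤ t →
      (P ∩ Q).card * (Fintype.card V + 1) + (Fintype.card V - P.card) ≤
      (P' ∩ Q').card * (Fintype.card V + 1) + (Fintype.card V - P'.card) :=
    fun P' Q' a b c d => hmin (P', Q') ((hF _ _).2 ⟨a, b, c, d⟩)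
  clear hmin hF
  set τ := (P ∩ Q).card with hτ
  have hC0 : 1 ≤ C.card := hC.card_pos
  have hm : τ * C.card ≤ C.card * t := by rw [mul_comm]; exact Nat.mul_le_mul_left _ ht1
  have hτC : τ ≤ τ * C.card := Nat.le_mul_of_pos_right _ hC0
  have hce := hS.card_eq
  have h1 : (P \ Q).card ≤ τ * C.card := iso (Γ := Γ) hadj hC hconn hint hS (by rw [← hτ]; omega)
  have h2 : (P \ Q).card + τ = P.card := Finset.card_sdiff_add_card_inter P Q
  obtain ⟨x, hx⟩ := hC
  obtain ⟨h, hh1, hh2⟩ := pick1 (Γ := Γ) x C (P ∩ Q) Pᶜ (by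
    rw [Finset.card_compl, mul_comm, ← hτ]; omega)
  have hSh := hS.smul hadj h
  have hC2 : C ⊆ h • P := by
    refine hconn _ _ hSh (by rw [← Finset.smul_finset_inter]; exact hh2) ?_
    obtain ⟨v, hv⟩ := hint h
    rw [Finset.mem_inter] at hv
    exact ⟨v, hv.1, Finset.smul_finset_subset_smul_finset hC1 hv.2⟩
  have hne : h • x ∈ h • P := Finset.smul_mem_smul_finset (hC1 hx)
  have hτh : (h • P ∩ h • Q).card = τ := by rw [← Finset.smul_finset_inter, Finset.card_smul_finset]
  have hPh : (h • P).card = P.card := Finset.card_smul_finset _ _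
  have hsub := submod P (h • P) Q (h • Q)
  have hI := hS.inter hSh
  have hU := (hS.symm.inter hSh.symm).symm
  have hcI : (P ∩ h • P).card ≤ P.card := Finset.card_le_card Finset.inter_subset_left
  have hcU : (P ∪ h • P).card ≤ P.card + (h • P).card := Finset.card_union_le _ _
  have hcU2 : P.card < (P ∪ h • P).card := by
    refine Finset.card_lt_card ⟨Finset.subset_union_left, fun hs => ?_⟩
    exact (Finset.mem_compl.1 hh1) (hs (Finset.mem_union_right _ hne))
  have key1 : τ ≤ ((P ∩ h • P) ∩ (Q ∪ h • Q)).card := by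
    by_contra hc
    push Not at hc
    have := hmin' _ _ hI (Finset.subset_inter hC1 hC2) (by omega) (by omega)
    nlinarith [Nat.sub_le (Fintype.card V) (P ∩ h • P).card]
  have key2 : ((P ∪ h • P) ∩ (Q ∩ h • Q)).card ≤ τ := by omega
  have := hmin' _ _ hU (hC1.trans Finset.subset_union_left) (by omega) (by omega)
  have h5 := Nat.mul_le_mul_right (Fintype.card V + 1) key2
  omega

theorem sep_large (hadj : ∀ (g : Γ) (u v : V), G.Adj (g • u) (g • v) ↔ G.Adj u v) {C : Finset V}
    (hC : C.Nonempty) (hconn : HConn G C) (hint : ∀ g : Γ, (C ∩ g • C).Nonempty)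
    {P0 Q0 : Finset V} (h0 : IsS G P0 Q0) (hCP : C ⊆ P0) (g0 : Γ) (hCQ : g0 • C ⊆ Q0) {t : ℕ}
    (ht : (P0 ∩ Q0).card ≤ t) : Fintype.card V ≤ 8 * (C.card * t) := by
  by_contra hlt
  have hC0 : 1 ≤ C.card := hC.card_pos
  have hm : (P0 ∩ Q0).card * C.card ≤ C.card * t := by rw [mul_comm]; exact Nat.mul_le_mul_left _ ht
  have hτC : (P0 ∩ Q0).card ≤ (P0 ∩ Q0).card * C.card := Nat.le_mul_of_pos_right _ hC0
  have h2 : (P0 \ Q0).card + (P0 ∩ Q0).card = P0.card := Finset.card_sdiff_add_card_inter P0 Q0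
  have h3 : (Q0 \ P0).card + (P0 ∩ Q0).card = Q0.card := by
    rw [Finset.inter_comm]; exact Finset.card_sdiff_add_card_inter Q0 P0
  by_cases hs : (P0 ∩ Q0).card * C.card < (Q0 \ P0).card
  · have := iso (Γ := Γ) hadj hC hconn hint h0 hs
    exact hlt (sep_large0 (Γ := Γ) hadj hC hconn hint h0 hCP (by omega) ht)
  · refine hlt (sep_large0 (Γ := Γ) hadj hC hconn hint (h0.symm.smul hadj g0⁻¹) (t := t) ?_ ?_ ?_)
    · intro v hv
      rw [← Finset.inv_smul_mem_iff, inv_inv]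
      exact hCQ (Finset.smul_mem_smul_finset hv)
    · rw [Finset.card_smul_finset]; omega
    · rw [← Finset.smul_finset_inter, Finset.card_smul_finset, Finset.inter_comm]; exact ht

end
end LC

namespace LC
open SimpleGraph
open scoped Pointwise
section
variable {V : Type} {G : SimpleGraph V}

theorem cyc_of_walk {v : V} {p : G.Walk v v} (hp : p.IsCycle) : ∃ f, Cyc G p.length f := by
  have h3 := hp.three_le_length
  have hpos : (0 : ℤ) < p.length := by omega
  have key : ∀ a : ℤ, ∃ j : ℕ, (a % (p.length : ℤ)).toNat = j ∧ j < p.length ∧ ((j : ℤ) = a % p.length) := by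
    intro a
    have h1 := Int.emod_nonneg a hpos.ne'
    have h2 := Int.emod_lt_of_pos a hpos
    exact ⟨_, rfl, by omega, by omega⟩
  refine ⟨fun a => p.getVert (a % (p.length : ℤ)).toNat, by omega, ?_, ?_, ?_⟩
  · intro a; simp
  · intro a
    show G.Adj (p.getVert (a % (p.length : ℤ)).toNat) (p.getVert ((a + 1) % (p.length : ℤ)).toNat)
    obtain ⟨j, hj, hj1, hj2⟩ := key a
    obtain ⟨i, hi, hi1, hi2⟩ := key (a + 1)
    rw [hj, hi]
    have h := p.adj_getVert_succ hj1
    rw [Int.add_emod, ← hj2, Int.emod_eq_of_lt (a := 1) (by omega) (by omega)] at hi2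
    by_cases hl : j + 1 = p.length
    · have : i = 0 := by
        have : (j : ℤ) + 1 = p.length := by omega
        rw [this, Int.emod_self] at hi2; omega
      subst this
      rw [hl, p.getVert_length] at h
      simpa using h
    · rw [Int.emod_eq_of_lt (by omega) (by omega)] at hi2
      have : i = j + 1 := by omega
      rw [this]; exact h
  · intro a b hab h1 h2
    obtain ⟨j, hj, hj1, hj2⟩ := key a
    obtain ⟨i, hi, hi1, hi2⟩ := key b
    simp only [hj, hi] at hab
    have hij : j = i := hp.getVert_injOn' (by simp; omega) (by simp; omega) hab
    have : a % p.length = b % p.length := by rw [← hj2, ← hi2, hij]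
    have h4 := Int.emod_emod_of_dvd
    have h5 : (p.length : ℤ) ∣ a - b := (Int.emod_eq_emod_iff_emod_sub_eq_zero.1 this) |> Int.dvd_of_emod_eq_zero
    have := Int.eq_zero_of_abs_lt_dvd h5 (by rw [abs_lt]; constructor <;> omega)
    omega

theorem Cyc.map {ℓ : ℤ} {f : ℤ → V} (hf : Cyc G ℓ f) (g : G ≃g G) : Cyc G ℓ (fun a => g • f a) := by
  refine ⟨hf.1, fun a => ?_, fun a => ?_, fun a b h => ?_⟩
  · show g • f (a + ℓ) = g • f a
    rw [hf.2.1]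
  · exact (g.map_adj_iff).2 (hf.2.2.1 a)
  · exact hf.2.2.2 a b (g.injective h)

variable [Fintype V] [DecidableEq V]

theorem rg_smul (f : ℤ → V) (g : G ≃g G) : rg (fun a => g • f a) = g • rg f := by
  ext v
  rw [Finset.mem_smul_finset]
  simp only [mem_rg]
  constructor
  · rintro ⟨a, rfl⟩; exact ⟨f a, ⟨a, rfl⟩, rfl⟩
  · rintro ⟨_, ⟨a, rfl⟩, rfl⟩; exact ⟨a, rfl⟩

theorem Cyc.card {ℓ : ℤ} {f : ℤ → V} (hf : Cyc G ℓ f) : ((rg f).card : ℤ) = ℓ := by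
  have : rg f = (Finset.Ico 0 ℓ).image f := by
    ext v
    rw [mem_rg, Finset.mem_image]
    constructor
    · rintro ⟨a, rfl⟩
      obtain ⟨b, h1, h2, h3⟩ := hf.mod a
      exact ⟨b, Finset.mem_Ico.2 ⟨h1, h2⟩, h3⟩
    · rintro ⟨a, _, h⟩; exact ⟨a, h⟩
  rw [this, Finset.card_image_of_injOn]
  · have := hf.1
    simp; omega
  · intro a ha b hb hab
    simp only [Finset.coe_Ico, Set.mem_Ico] at ha hb
    exact hf.2.2.2 a b hab (by omega) (by omega)

theorem Cyc.hconn {ℓ : ℤ} {f : ℤ → V} (hf : Cyc G ℓ f) : HConn G (rg f) := by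
  intro P Q hS h0 ⟨v, hv, hvP⟩
  have hn : ∀ a, ¬ (f a ∈ P ∧ f a ∈ Q) := by
    intro a h
    have : f a ∈ rg f ∩ (P ∩ Q) := Finset.mem_inter.2 ⟨mem_rg.2 ⟨a, rfl⟩, Finset.mem_inter.2 h⟩
    rw [h0] at this; simp at this
  have hstep : ∀ a b, G.Adj (f a) (f b) → f a ∈ P → f b ∈ P := by
    intro a b hab ha
    by_contra hb
    exact hS.2 _ _ ha (fun h => hn a ⟨ha, h⟩) ((hS.cov _).resolve_left hb) hb hab
  obtain ⟨a, rfl⟩ := mem_rg.1 hv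
  intro w hw
  obtain ⟨b, rfl⟩ := mem_rg.1 hw
  refine Int.inductionOn' (motive := fun b => f b ∈ P) b a hvP ?_ ?_
  · intro k _ h; exact hstep _ _ (hf.2.2.1 k) h
  · intro k _ h
    refine hstep _ _ ?_ h
    have := hf.2.2.1 (k - 1)
    rw [sub_add_cancel] at this
    exact this.symm

theorem isS_of_sep {A B S : Finset V} (h : Sep (arcs G) A B S) :
    ∃ P Q, IsS G P Q ∧ A ⊆ P ∧ B ⊆ Q ∧ P ∩ Q = S := by
  classical
  let R : Finset V := Finset.univ.filter (fun v => ∃ l : List V, l.IsChain (fun a b => (a, b) ∈ arcs G) ∧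
    (∃ a ∈ A, l.head? = some a) ∧ l.getLast? = some v ∧ ∀ u ∈ l, u ∉ S)
  have hR : ∀ v, v ∈ R ↔ ∃ l : List V, l.IsChain (fun a b => (a, b) ∈ arcs G) ∧
    (∃ a ∈ A, l.head? = some a) ∧ l.getLast? = some v ∧ ∀ u ∈ l, u ∉ S := by intro v; simp [R]
  have hRS : ∀ v ∈ R, v ∉ S := by
    intro v hv
    obtain ⟨l, _, _, h3, h4⟩ := (hR v).1 hv
    exact h4 v (List.mem_of_getLast? h3)
  refine ⟨R ∪ S, Rᶜ, ⟨?_, ?_⟩, ?_, ?_, ?_⟩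
  · ext v; by_cases hv : v ∈ R <;> simp [hv]
  · intro u v h1 h2 h3 h4 hadj
    simp only [Finset.mem_compl, not_not, Finset.mem_union, not_or] at h1 h2 h3 h4
    obtain ⟨l, a1, a2, a3, a4⟩ := (hR u).1 h2
    apply h4.1
    rw [hR]
    refine ⟨l ++ [v], ?_, ?_, by simp, ?_⟩
    · rw [List.isChain_append]
      refine ⟨a1, by simp, ?_⟩
      intro x hx y hy
      simp only [List.head?_cons, Option.mem_def, Option.some.injEq] at hx hy
      rw [a3] at hx
      cases hx; cases hy
      simpa [arcs] using hadj
    · obtain ⟨a, ha, hl⟩ := a2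
      refine ⟨a, ha, ?_⟩
      rw [List.head?_append, hl]; rfl
    · intro w hw
      rcases List.mem_append.1 hw with hw | hw
      · exact a4 w hw
      · rw [List.mem_singleton.1 hw]; exact h4.2
  · intro v hv
    by_cases hvS : v ∈ S
    · exact Finset.mem_union_right _ hvS
    · refine Finset.mem_union_left _ ((hR v).2 ⟨[v], by simp, ⟨v, hv, rfl⟩, rfl, ?_⟩)
      simpa using hvS
  · intro v hv
    rw [Finset.mem_compl, hR]
    rintro ⟨l, h1, h2, h3, h4⟩
    obtain ⟨w, hw, hw2⟩ := h l ⟨h1, h2, v, hv, h3⟩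
    exact h4 w hw hw2
  · ext v
    simp only [Finset.mem_inter, Finset.mem_union, Finset.mem_compl]
    constructor
    · rintro ⟨h1 | h1, h2⟩
      · exact absurd h1 h2
      · exact h1
    · intro hv; exact ⟨Or.inr hv, fun h' => hRS v h' hv⟩

theorem hom_conn {W : Type} {H : SimpleGraph W} (φ : H →g G) (hH : H.Preconnected) {P Q : Finset V}
    (hS : IsS G P Q) (hn : ∀ a, ¬ (φ a ∈ P ∧ φ a ∈ Q)) {a : W} (ha : φ a ∈ P) (b : W) : φ b ∈ P := by
  obtain ⟨p⟩ := hH a b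
  induction p with
  | nil => exact ha
  | cons h p ih =>
    apply ih
    by_contra hb
    exact hS.2 _ _ ha (fun h => hn _ ⟨ha, h⟩) ((hS.cov _).resolve_left hb) hb (φ.map_adj h)

theorem no_cut (hG : G.Connected) (hT : ∀ u v : V, ∃ φ : G ≃g G, φ u = v) (hn : 3 ≤ Fintype.card V)
    {P Q : Finset V} (hS : IsS G P Q) (hc : (P ∩ Q).card ≤ 1) {a b : V} (ha : a ∈ P) (ha' : a ∉ Q)
    (hb' : b ∉ P) : False := by
  by_cases h0 : (P ∩ Q) = ∅
  · refine hb' (hom_conn (SimpleGraph.Hom.id : G →g G) hG.preconnected hS (fun v hv => ?_) (a := a) ha b)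
    have : v ∈ P ∩ Q := Finset.mem_inter.2 hv
    rw [h0] at this; simp at this
  · have h1 : (P ∩ Q).card = 1 := by
      have := Finset.card_pos.2 (Finset.nonempty_iff_ne_empty.2 h0); omega
    obtain ⟨s, hs⟩ := Finset.card_eq_one.1 h1
    have : Nontrivial V := Fintype.one_lt_card_iff_nontrivial.1 (by omega)
    obtain ⟨w, hw⟩ := hG.exists_connected_induce_compl_singleton_of_finite_nontrivial
    obtain ⟨g, hg⟩ := hT w s
    let φ : G.induce {w}ᶜ →g G := g.toHom.comp (Embedding.induce _).toHom
    have hφ : ∀ x, φ x = g x.1 := fun x => rfl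
    have hP : ∀ v, v ≠ s → ∃ x, φ x = v := by
      intro v hv
      refine ⟨⟨g.symm v, ?_⟩, ?_⟩
      · intro h
        apply hv
        rw [← hg, ← Set.mem_singleton_iff.1 h]; simp
      · rw [hφ]; simp
    have hns : ∀ v, v ∈ P → v ∈ Q → v = s := by
      intro v h1 h2
      have : v ∈ P ∩ Q := Finset.mem_inter.2 ⟨h1, h2⟩
      rw [hs] at this; simpa using this
    have hsPQ : s ∈ P ∩ Q := by rw [hs]; simp
    rw [Finset.mem_inter] at hsPQ
    obtain ⟨x, hx⟩ := hP a (fun h => ha' (h ▸ hsPQ.2))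
    obtain ⟨y, hy⟩ := hP b (fun h => hb' (h ▸ hsPQ.1))
    have := hom_conn φ hw.preconnected hS (fun z hz => by
      have h2 := hns _ hz.1 hz.2
      rw [hφ, ← hg] at h2
      exact z.2 (g.injective h2)) (a := x) (by rw [hx]; exact ha) y
    rw [hy] at this
    exact hb' this

theorem exists_cycle (hG : G.Connected) (hT : ∀ u v : V, ∃ φ : G ≃g G, φ u = v) (hn : 3 ≤ Fintype.card V) :
    ∃ (v : V) (p : G.Walk v v), p.IsCycle := by
  classical
  by_contra hc
  push Not at hc
  have hA : G.IsAcyclic := fun v p hp => hc v p hp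
  have hTr : G.IsTree := ⟨hG, hA⟩
  have : Nontrivial V := Fintype.one_lt_card_iff_nontrivial.1 (by omega)
  obtain ⟨v, hv⟩ := hTr.exists_vert_degree_one_of_nontrivial
  have hd : ∀ u, G.degree u = 1 := by
    intro u
    obtain ⟨g, rfl⟩ := hT v u
    rw [← hv]; exact g.degree_eq v
  have h1 := G.sum_degrees_eq_twice_card_edges
  have h2 := hTr.card_edgeFinset
  simp only [hd] at h1
  simp at h1
  omega

end

theorem numeric {n ℓ k t m : ℕ} (hk : 1 ≤ k) (h1 : n ≤ 8 * (ℓ * t)) (h2 : n * k ≤ ℓ * ℓ)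
    (hm : m ^ 5 < 2 ^ 25 * (k + 1) ^ 8) (ht : t ≤ m + k) : n ^ 13 ≤ 2 ^ 53 * ℓ ^ 21 := by
  have e1 : (k + 1) ^ 8 ≤ (2 * k) ^ 8 := Nat.pow_le_pow_left (by omega) 8
  have e2 : m ^ 5 ≤ 2 ^ 33 * k ^ 8 := by rw [mul_pow] at e1; omega
  have e3 : k ^ 5 ≤ 2 ^ 33 * k ^ 8 :=
    (Nat.pow_le_pow_right hk (by norm_num)).trans (Nat.le_mul_of_pos_left _ (by norm_num))
  have e4 : t ^ 5 ≤ 2 ^ 38 * k ^ 8 := by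
    have : t ≤ 2 * max m k := by omega
    have h := Nat.pow_le_pow_left this 5
    rw [mul_pow] at h
    have : (max m k) ^ 5 ≤ 2 ^ 33 * k ^ 8 := by
      rcases max_choice m k with h | h <;> rw [h] <;> assumption
    omega
  calc n ^ 13 = n ^ 5 * n ^ 8 := by ring
    _ ≤ (8 * (ℓ * t)) ^ 5 * n ^ 8 := Nat.mul_le_mul_right _ (Nat.pow_le_pow_left h1 5)
    _ = 2 ^ 15 * ℓ ^ 5 * n ^ 8 * t ^ 5 := by ring
    _ ≤ 2 ^ 15 * ℓ ^ 5 * n ^ 8 * (2 ^ 38 * k ^ 8) := Nat.mul_le_mul_left _ e4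
    _ = 2 ^ 53 * ℓ ^ 5 * (n * k) ^ 8 := by ring
    _ ≤ 2 ^ 53 * ℓ ^ 5 * (ℓ * ℓ) ^ 8 := Nat.mul_le_mul_left _ (Nat.pow_le_pow_left h2 8)
    _ = 2 ^ 53 * ℓ ^ 21 := by ring

theorem core_main {V : Type} [Fintype V] (G : SimpleGraph V) (hG : G.Connected)
    (hT : ∀ u v : V, ∃ φ : G ≃g G, φ u = v) (hn : 3 ≤ Fintype.card V) :
    ∃ (v : V) (p : G.Walk v v), p.IsCycle ∧ Fintype.card V ^ 13 ≤ 2 ^ 53 * p.length ^ 21 := by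
  classical
  obtain ⟨v0, p0, hp0⟩ := exists_cycle hG hT hn
  have hbd : ∀ ℓ : ℕ, (∃ (v : V) (p : G.Walk v v), p.IsCycle ∧ p.length = ℓ) → ℓ ≤ Fintype.card V := by
    rintro ℓ ⟨v, p, hp, rfl⟩
    obtain ⟨f, hf⟩ := cyc_of_walk hp
    have := hf.card
    have h2 := Finset.card_le_univ (rg f)
    omega
  obtain ⟨v, p, hp, hpl⟩ := Nat.findGreatest_spec
    (P := fun ℓ => ∃ (v : V) (p : G.Walk v v), p.IsCycle ∧ p.length = ℓ) (hbd _ ⟨v0, p0, hp0, rfl⟩) ⟨v0, p0, hp0, rfl⟩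
  have hM : MaxL G p.length := by
    intro w q hq
    have : q.length ≤ p.length := by
      rw [hpl]; exact Nat.le_findGreatest (hbd _ ⟨w, q, hq, rfl⟩) ⟨w, q, hq, rfl⟩
    exact_mod_cast this
  refine ⟨v, p, hp, ?_⟩
  clear hpl hbd hp0
  obtain ⟨f, hf⟩ := cyc_of_walk hp
  have hcard : (rg f).card = p.length := by exact_mod_cast hf.card
  have hl3 := hp.three_le_length
  have hne : (rg f).Nonempty := Finset.card_pos.1 (by omega)
  have : Finite (G ≃g G) := Finite.of_injective (fun g : G ≃g G => g.toEquiv) RelIso.toEquiv_injective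
  have : Fintype (G ≃g G) := Fintype.ofFinite _
  have : MulAction.IsPretransitive (G ≃g G) V := ⟨fun u v => hT u v⟩
  have hadj : ∀ (g : G ≃g G) (u v : V), G.Adj (g • u) (g • v) ↔ G.Adj u v := fun g u v => g.map_adj_iff
  have hint : ∀ g : G ≃g G, (rg f ∩ g • rg f).Nonempty := by
    intro g
    by_contra hc
    rw [Finset.not_nonempty_iff_eq_empty] at hc
    obtain ⟨S, hS, hS1⟩ := sep_bound0 hf (hf.map g) hM (by rw [rg_smul, hc]; rfl)
    obtain ⟨P, Q, hPQ, hP, hQ, rfl⟩ := isS_of_sep hS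
    have hx : ∃ x ∈ rg f, x ∉ P ∩ Q := Finset.exists_mem_notMem_of_card_lt_card (by omega)
    have hy : ∃ x ∈ g • rg f, x ∉ P ∩ Q :=
      Finset.exists_mem_notMem_of_card_lt_card (by rw [Finset.card_smul_finset]; omega)
    rw [rg_smul] at hQ
    obtain ⟨x, hx, hx2⟩ := hx
    obtain ⟨y, hy, hy2⟩ := hy
    exact no_cut hG hT hn hPQ hS1 (hP hx) (fun h => hx2 (Finset.mem_inter.2 ⟨hP hx, h⟩))
      (fun h => hy2 (Finset.mem_inter.2 ⟨h, hQ hy⟩))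
  obtain ⟨g, hg⟩ := exists_small (Γ := G ≃g G) (rg f) (rg f)
  set k := (rg f ∩ g • rg f).card with hk
  have hk1 : 1 ≤ k := Finset.card_pos.2 (hint g)
  have hex : ∃ m : ℕ, 2 ^ 25 * (k + 1) ^ 8 ≤ m ^ 5 :=
    ⟨2 ^ 25 * (k + 1) ^ 8, Nat.le_self_pow (by norm_num) _⟩
  obtain ⟨m, hm, hm'⟩ : ∃ m : ℕ, 2 ^ 25 * (k + 1) ^ 8 ≤ (m + 1) ^ 5 ∧ m ^ 5 < 2 ^ 25 * (k + 1) ^ 8 := by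
    have h1 := Nat.find_spec hex
    obtain ⟨m, hm⟩ : ∃ m, Nat.find hex = m + 1 := by
      refine Nat.exists_eq_succ_of_ne_zero (fun h0 => ?_)
      rw [h0] at h1
      have : 0 < 2 ^ 25 * (k + 1) ^ 8 := by positivity
      omega
    refine ⟨m, by rw [← hm]; exact h1, ?_⟩
    have := Nat.find_min hex (m := m) (by omega)
    omega
  obtain ⟨S, hS, hS1⟩ := sep_bound hf (hf.map g) hM (m + 1) (by rw [rg_smul]; exact hm)
  rw [rg_smul] at hS hS1
  obtain ⟨P, Q, hPQ, hP, hQ, rfl⟩ := isS_of_sep hS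
  have hfin := sep_large (Γ := G ≃g G) hadj hne hf.hconn hint hPQ hP g hQ le_rfl
  rw [hcard] at hfin hg
  exact numeric hk1 hfin hg hm' (by omega)

end LC

theorem long_cycle_in_vertex_transitive :
    ∃ c : ℝ, 0 < c ∧ ∀ (V : Type) [Fintype V] (G : SimpleGraph V), G.Connected →
        (∀ u v : V, ∃ φ : G ≃g G, φ u = v) → 3 ≤ Fintype.card V →
        ∃ (v : V) (p : G.Walk v v), p.IsCycle ∧ c * (Fintype.card V : ℝ) ^ ((13 : ℝ) / 21) ≤ (p.length : ℝ) := by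
  refine ⟨1 / 2 ^ 3, by positivity, ?_⟩
  intro V _ G hG hT hn
  obtain ⟨v, p, hp, h⟩ := LC.core_main G hG hT hn
  refine ⟨v, p, hp, ?_⟩
  have h' : (Fintype.card V : ℝ) ^ 13 ≤ 2 ^ 53 * (p.length : ℝ) ^ 21 := by exact_mod_cast h
  refine le_of_pow_le_pow_left₀ (n := 21) (by norm_num) (by positivity) ?_
  rw [mul_pow, ← Real.rpow_natCast ((Fintype.card V : ℝ) ^ ((13 : ℝ) / 21)) 21, ← Real.rpow_mul (by positivity)]
  have e : (13 : ℝ) / 21 * ((21 : ℕ) : ℝ) = ((13 : ℕ) : ℝ) := by norm_num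
  rw [e, Real.rpow_natCast]
  have hpos : (0 : ℝ) ≤ (p.length : ℝ) ^ 21 := by positivity
  norm_num
  norm_num at h'
  linarith
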